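/- arXiv:1510.04387 — 2 statements merged into one kernel-verified Lean document; each statement's English description precedes it below -/
import Mathlib

section
/- Assume the Generalized Riemann Hypothesis for Dedekind zeta functions of quadratic number fields (equivalently, for Dirichlet L-functions of real Dirichlet characters). Then there exists an absolute constant C such that for every positive integer d, every real non-principal Dirichlet character χ modulo d, and every real x ≥ 2, the number of primes p ≤ x with χ(p) = 1 equals (1/2)·Li(x) plus an error of absolute value at most C·x^{1/2}·log(d·x), where Li(x) = ∫_2^x dt/log t is the logarithmic integral. -/
open scoped Classical

/-- The Generalized Riemann Hypothesis for Dirichlet L-functions of real Dirichlet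
characters (equivalently, for Dedekind zeta functions of quadratic number fields). -/
def GRHreal : Prop :=
  ∀ (N : ℕ) [NeZero N] (χ : DirichletCharacter ℂ N), (∀ a : ZMod N, (χ a).im = 0) →
    ∀ s : ℂ, DirichletCharacter.LFunction χ s = 0 → 0 < s.re → s.re < 1 → s.re = 1 / 2

/-- The logarithmic integral `Li(x) = ∫_2^x dt / log t`. -/
noncomputable def Li (x : ℝ) : ℝ := ∫ t in (2 : ℝ)..x, 1 / Real.log t

section
open Metric Complex

lemma blaschke_norm {ρ z : ℂ} (_hρ : ‖ρ‖ ≤ 17/10) (hz : ‖z‖ = 9/5) :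
    ‖((9/5:ℂ)^2 - (starRingEnd ℂ) ρ * z) / (9/5)‖ = ‖z - ρ‖ := by
  have h1 : ((9/5:ℂ)^2 - (starRingEnd ℂ) ρ * z) = z * (starRingEnd ℂ) (z - ρ) := by
    have : z * (starRingEnd ℂ) z = (9/5:ℂ)^2 := by
      rw [Complex.mul_conj, Complex.normSq_eq_norm_sq, hz]; push_cast; ring
    rw [map_sub, mul_sub, this]; ring
  rw [h1, norm_div, norm_mul, Complex.norm_conj, hz]
  norm_num

lemma blaschke_ne {ρ z : ℂ} (hρ : ‖ρ‖ ≤ 17/10) (hz : ‖z‖ ≤ 17/10) :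
    35/100 ≤ ‖(9/5:ℂ)^2 - (starRingEnd ℂ) ρ * z‖ := by
  have h1 := norm_sub_norm_le ((9/5:ℂ)^2) ((starRingEnd ℂ) ρ * z)
  rw [norm_mul, Complex.norm_conj] at h1
  have h2 : ‖ρ‖ * ‖z‖ ≤ 17/10 * (17/10) := by gcongr
  have h3 : ‖(9/5:ℂ)^2‖ = 81/25 := by norm_num
  rw [h3] at h1
  linarith

theorem blaschke_aux (M : ℝ) (n : ℕ) : ∀ f : ℂ → ℂ, DifferentiableOn ℂ f (ball 0 2) →
    (∀ z ∈ closedBall (0:ℂ) (9/5), ‖f z‖ ≤ M) → f 0 ≠ 0 → M < ‖f 0‖ * (18/17)^n →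
    ∃ (Z : List ℂ) (g : ℂ → ℂ), DifferentiableOn ℂ g (ball 0 2) ∧
      (∀ z ∈ closedBall (0:ℂ) (9/5), ‖g z‖ ≤ M) ∧
      (∀ z ∈ closedBall (0:ℂ) (17/10), g z ≠ 0) ∧
      ‖f 0‖ * (18/17)^Z.length ≤ ‖g 0‖ ∧
      (∀ ρ ∈ Z, ρ ∈ closedBall (0:ℂ) (17/10) ∧ f ρ = 0) ∧
      ∀ z ∈ closedBall (0:ℂ) (17/10), f z ≠ 0 → logDeriv f z = logDeriv g z +
        (Z.map fun ρ => 1/(z-ρ) + (starRingEnd ℂ) ρ/((9/5:ℂ)^2 - (starRingEnd ℂ) ρ * z)).sum := by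
  induction n with
  | zero =>
    intro f hf hM h0 hlt
    have := hM 0 (by simp; norm_num)
    simp at hlt; linarith
  | succ n ih =>
    intro f hf hM h0 hlt
    by_cases hz : ∃ ρ ∈ closedBall (0:ℂ) (17/10), f ρ = 0
    swap
    · push Not at hz
      exact ⟨[], f, hf, hM, hz, by simp, by simp, by simp⟩
    obtain ⟨ρ, hρ, hfρ⟩ := hz
    have hρ' : ‖ρ‖ ≤ 17/10 := by simpa using hρ
    have hρ0 : ρ ≠ 0 := by rintro rfl; exact h0 hfρ
    have hρ2 : ball (0:ℂ) 2 ∈ nhds ρ := isOpen_ball.mem_nhds (by simp; linarith)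
    set B : ℂ → ℂ := fun z => ((9/5:ℂ)^2 - (starRingEnd ℂ) ρ * z) / (9/5) with hB
    have hBd : Differentiable ℂ B := by fun_prop
    have hdd : DifferentiableOn ℂ (dslope f ρ) (ball 0 2) :=
      (Complex.differentiableOn_dslope hρ2).2 hf
    have hfe : ∀ z, f z = (z - ρ) * dslope f ρ z := by
      intro z
      have := sub_smul_dslope f ρ z
      rw [hfρ] at this; simpa using this.symm
    have hBne : ∀ z ∈ closedBall (0:ℂ) (17/10), B z ≠ 0 := by
      intro z hz
      have := blaschke_ne hρ' (by simpa using hz)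
      simp only [hB]
      refine div_ne_zero ?_ (by norm_num)
      intro h; rw [h] at this; norm_num at this
    set g1 : ℂ → ℂ := fun z => dslope f ρ z * B z with hg1
    have hg1d : DifferentiableOn ℂ g1 (ball 0 2) := hdd.mul hBd.differentiableOn
    have hg1M : ∀ z ∈ closedBall (0:ℂ) (9/5), ‖g1 z‖ ≤ M := by
      intro z hz
      rw [← closure_ball _ (by norm_num : (9/5:ℝ) ≠ 0)] at hz
      refine Complex.norm_le_of_forall_mem_frontier_norm_le (U := ball (0:ℂ) (9/5))
        Metric.isBounded_ball ?_ ?_ hz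
      · refine DifferentiableOn.diffContOnCl ?_
        rw [closure_ball _ (by norm_num : (9/5:ℝ) ≠ 0)]
        exact hg1d.mono (closedBall_subset_ball (by norm_num))
      · intro w hw
        rw [frontier_ball _ (by norm_num : (9/5:ℝ) ≠ 0)] at hw
        have hw' : ‖w‖ = 9/5 := by simpa using hw
        rw [hg1]; simp only [norm_mul]
        rw [hB]; simp only [blaschke_norm hρ' hw']
        rw [mul_comm, ← norm_mul, ← hfe]
        exact hM w (sphere_subset_closedBall hw)
    have hg10 : ‖f 0‖ * (18/17) ≤ ‖g1 0‖ := by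
      have e1 : ‖f 0‖ = ‖ρ‖ * ‖dslope f ρ 0‖ := by
        conv_lhs => rw [hfe 0]
        simp
      have e2 : ‖g1 0‖ = ‖dslope f ρ 0‖ * (9/5) := by
        rw [hg1]; simp only [norm_mul, hB]; norm_num
      rw [e1, e2]
      nlinarith [norm_nonneg (dslope f ρ 0)]
    have hf0 : 0 < ‖f 0‖ := norm_pos_iff.2 h0
    have hg1ne : g1 0 ≠ 0 := by
      rw [← norm_pos_iff]; nlinarith
    obtain ⟨Z, g, a1, a2, a3, a4, a5, a6⟩ := ih g1 hg1d hg1M hg1ne (by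
      rw [pow_succ] at hlt
      have : (0:ℝ) < (18/17)^n := by positivity
      nlinarith)
    refine ⟨ρ :: Z, g, a1, a2, a3, ?_, ?_, ?_⟩
    · rw [List.length_cons, pow_succ]
      have : (0:ℝ) < (18/17)^Z.length := by positivity
      nlinarith
    · intro τ hτ
      rcases List.mem_cons.1 hτ with rfl | hτ
      · exact ⟨hρ, hfρ⟩
      · obtain ⟨b1, b2⟩ := a5 τ hτ
        refine ⟨b1, ?_⟩
        rw [hfe]
        have : dslope f ρ τ = 0 := by
          rcases mul_eq_zero.1 b2 with h | h
          · exact h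
          · exact absurd h (hBne τ b1)
        rw [this, mul_zero]
    · intro z hz hfz
      have hzρ : z - ρ ≠ 0 := by
        intro h; apply hfz; rw [hfe, h, zero_mul]
      have hds : dslope f ρ z ≠ 0 := by
        intro h; apply hfz; rw [hfe, h, mul_zero]
      have hg1z : g1 z ≠ 0 := mul_ne_zero hds (hBne z hz)
      have hzb : ball (0:ℂ) 2 ∈ nhds z := isOpen_ball.mem_nhds (by
        have : ‖z‖ ≤ 17/10 := by simpa using hz
        simp; linarith)
      have hdz : DifferentiableAt ℂ (dslope f ρ) z := hdd.differentiableAt hzb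
      have l1 : logDeriv f z = 1/(z-ρ) + logDeriv (dslope f ρ) z := by
        have : f = fun z => (z - ρ) * dslope f ρ z := funext hfe
        conv_lhs => rw [this]
        rw [logDeriv_mul z hzρ hds (by fun_prop) hdz]
        congr 1
        simp [logDeriv_apply]
      have l2 : logDeriv g1 z = logDeriv (dslope f ρ) z + logDeriv B z :=
        logDeriv_mul z hds (hBne z hz) hdz hBd.differentiableAt
      have l3 : logDeriv B z = - ((starRingEnd ℂ) ρ/((9/5:ℂ)^2 - (starRingEnd ℂ) ρ * z)) := by
        have hd : HasDerivAt B (-((starRingEnd ℂ) ρ) / (9/5)) z := by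
          have := (((hasDerivAt_id z).const_mul ((starRingEnd ℂ) ρ)).const_sub ((9/5:ℂ)^2)).div_const (9/5)
          simpa using this
        rw [logDeriv_apply, hd.deriv]
        have := hBne z hz
        simp only [hB] at this ⊢
        rw [div_div_div_cancel_right₀ (by norm_num), neg_div]
      rw [List.map_cons, List.sum_cons, l1]
      have := a6 z hz hg1z
      rw [l2, l3] at this
      linear_combination this

end

section
open Metric Complex

theorem logDeriv_bound {g : ℂ → ℂ} {B : ℝ} (hB : 0 < B) (hg : DifferentiableOn ℂ g (ball 0 2))
    (hM : ∀ z ∈ closedBall (0:ℂ) (9/5), ‖g z‖ ≤ ‖g 0‖ * Real.exp B)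
    (hne : ∀ z ∈ closedBall (0:ℂ) (17/10), g z ≠ 0) {z : ℂ} (hz : ‖z‖ ≤ 16/10) :
    ‖logDeriv g z‖ ≤ 1320 * B := by
  have hsub : ball (0:ℂ) (17/10) ⊆ ball 0 2 := ball_subset_ball (by norm_num)
  have hne' : ∀ z ∈ ball (0:ℂ) (17/10), g z ≠ 0 := fun z hz => hne z (ball_subset_closedBall hz)
  have hgd : ∀ z ∈ ball (0:ℂ) (17/10), DifferentiableAt ℂ g z := fun z hz =>
    hg.differentiableAt (isOpen_ball.mem_nhds (hsub hz))
  have hld : DifferentiableOn ℂ (logDeriv g) (ball 0 (17/10)) := by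
    have h1 : DifferentiableOn ℂ (deriv g) (ball 0 2) := hg.deriv isOpen_ball
    exact (h1.mono hsub).div (hg.mono hsub) hne'
  obtain ⟨h, hh0, hh⟩ := hld.isExactOn_ball.with_val_at 0 0
  have hhd : DifferentiableOn ℂ h (ball 0 (17/10)) := fun z hz =>
    (hh z hz).differentiableAt.differentiableWithinAt
  have key : ∀ z ∈ ball (0:ℂ) (17/10), g z * exp (- h z) = g 0 := by
    intro z hz
    have hder : ∀ w ∈ ball (0:ℂ) (17/10), HasDerivAt (fun z => g z * exp (- h z)) 0 w := by
      intro w hw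
      have h1 := (hgd w hw).hasDerivAt.mul ((hh w hw).neg.cexp)
      refine HasDerivAt.congr_deriv h1 ?_
      rw [logDeriv_apply]
      have := hne' w hw
      simp only [Pi.neg_apply]
      field_simp
      ring
    have := isOpen_ball.is_const_of_deriv_eq_zero (convex_ball (0:ℂ) (17/10)).isPreconnected
      (f := fun z => g z * exp (- h z))
      (fun w hw => (hder w hw).differentiableAt.differentiableWithinAt)
      (fun w hw => (hder w hw).deriv) hz (mem_ball_self (by norm_num))
    simpa [hh0] using this
  have hre : Set.MapsTo h (ball 0 (17/10)) {z | z.re ≤ B} := by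
    intro w hw
    have h1 := key w hw
    have h2 : ‖g w‖ = ‖g 0‖ * Real.exp (h w).re := by
      rw [← h1, norm_mul, Complex.norm_exp, mul_assoc, ← Real.exp_add]; simp
    have h3 := hM w (closedBall_subset_closedBall (by norm_num) (ball_subset_closedBall hw))
    rw [h2] at h3
    have h4 : 0 < ‖g 0‖ := norm_pos_iff.2 (hne' 0 (mem_ball_self (by norm_num)))
    have := le_of_mul_le_mul_left h3 h4
    exact Real.exp_le_exp.1 this
  have hbc : ∀ w : ℂ, ‖w‖ ≤ 33/20 → ‖h w‖ ≤ 66 * B := by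
    intro w hw
    have := borelCaratheodory_zero hB hhd hre (by norm_num) (z := w) (by simp; linarith) hh0
    refine this.trans ?_
    rw [div_le_iff₀ (by linarith)]
    nlinarith
  have hz' : z ∈ ball (0:ℂ) (17/10) := by simp; linarith
  rw [← (hh z hz').deriv]
  have hsub2 : closedBall z (1/20) ⊆ ball (0:ℂ) (17/10) := by
    intro w hw
    have h1 : ‖w - z‖ ≤ 1/20 := by simpa [dist_eq_norm] using hw
    have h2 := norm_add_le (w - z) z
    simp at h2 ⊢; linarith
  have := norm_deriv_le_of_forall_mem_sphere_norm_le (c := z) (R := 1/20) (C := 66 * B) (f := h)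
    (by norm_num) (DifferentiableOn.diffContOnCl (by
      rw [closure_ball _ (by norm_num : (1/20:ℝ) ≠ 0)]; exact hhd.mono hsub2)) (by
      intro w hw
      apply hbc
      have h1 : ‖w - z‖ = 1/20 := by simpa [dist_eq_norm] using hw
      have h2 := norm_add_le (w - z) z
      simp at h2; linarith)
  refine this.trans (le_of_eq (by ring))

theorem local_lemma0 {f : ℂ → ℂ} {B : ℝ} (hB : 0 < B) (hf : DifferentiableOn ℂ f (ball 0 2))
    (h0 : f 0 ≠ 0) (hM : ∀ z ∈ closedBall (0:ℂ) (9/5), ‖f z‖ ≤ ‖f 0‖ * Real.exp B) :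
    ∃ Z : List ℂ, (Z.length : ℝ) ≤ 18 * B ∧ (∀ ρ ∈ Z, ρ ∈ closedBall (0:ℂ) (17/10) ∧ f ρ = 0) ∧
      ∀ z : ℂ, ‖z‖ ≤ 16/10 → f z ≠ 0 →
        ‖logDeriv f z - (Z.map fun ρ => 1/(z-ρ)).sum‖ ≤ 1500 * B := by
  have hf0 : 0 < ‖f 0‖ := norm_pos_iff.2 h0
  obtain ⟨n, hn⟩ := pow_unbounded_of_one_lt (Real.exp B) (by norm_num : (1:ℝ) < 18/17)
  obtain ⟨Z, g, a1, a2, a3, a4, a5, a6⟩ := blaschke_aux _ n f hf hM h0 (by gcongr)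
  have hlen : (Z.length : ℝ) ≤ 18 * B := by
    have h1 := a4.trans (a2 0 (by simp; norm_num))
    have h2 := le_of_mul_le_mul_left h1 hf0
    have h3 := Real.log_le_log (by positivity) h2
    rw [Real.log_pow, Real.log_exp] at h3
    have h4 := Real.one_sub_inv_le_log_of_pos (by norm_num : (0:ℝ) < 18/17)
    norm_num at h4
    have h5 : (0:ℝ) ≤ Z.length := by positivity
    nlinarith
  refine ⟨Z, hlen, a5, ?_⟩
  intro z hz hfz
  have hz' : ‖z‖ ≤ 17/10 := by linarith
  rw [a6 z (by simpa using hz') hfz, List.sum_map_add]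
  have e : ∀ a b c : ℂ, a + (b + c) - b = a + c := by intros; ring
  rw [e]
  have hg0 : ‖f 0‖ ≤ ‖g 0‖ := by
    refine le_trans ?_ a4
    exact le_mul_of_one_le_right hf0.le (one_le_pow₀ (by norm_num))
  have b1 : ‖logDeriv g z‖ ≤ 1320 * B := logDeriv_bound hB a1 (fun w hw => (a2 w hw).trans (by gcongr)) a3 hz
  have b2 : ‖(Z.map fun ρ => (starRingEnd ℂ) ρ/((9/5:ℂ)^2 - (starRingEnd ℂ) ρ * z)).sum‖
      ≤ Z.length * 10 := by
    have : ∀ W : List ℂ, (∀ ρ ∈ W, ‖ρ‖ ≤ 17/10) →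
      ‖(W.map fun ρ => (starRingEnd ℂ) ρ/((9/5:ℂ)^2 - (starRingEnd ℂ) ρ * z)).sum‖ ≤ W.length * 10 := by
      intro W
      induction W with
      | nil => simp
      | cons ρ W ih =>
        intro hW
        rw [List.map_cons, List.sum_cons, List.length_cons]
        have h1 := ih (fun τ hτ => hW τ (List.mem_cons_of_mem _ hτ))
        have hρ := hW ρ List.mem_cons_self
        have h2 : ‖(starRingEnd ℂ) ρ/((9/5:ℂ)^2 - (starRingEnd ℂ) ρ * z)‖ ≤ 10 := by
          have h3 := blaschke_ne hρ hz'
          rw [norm_div, Complex.norm_conj, div_le_iff₀ (by linarith)]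
          linarith
        refine (norm_add_le _ _).trans ?_
        push_cast; linarith
    exact this Z (fun ρ hρ => by simpa using (a5 ρ hρ).1)
  refine (norm_add_le _ _).trans ?_
  linarith

theorem local_lemma {f : ℂ → ℂ} {B : ℝ} {c : ℂ} (hB : 0 < B) (hf : DifferentiableOn ℂ f (ball c 2))
    (h0 : f c ≠ 0) (hM : ∀ z ∈ closedBall c (9/5), ‖f z‖ ≤ ‖f c‖ * Real.exp B) :
    ∃ Z : List ℂ, (Z.length : ℝ) ≤ 18 * B ∧ (∀ ρ ∈ Z, ρ ∈ closedBall c (17/10) ∧ f ρ = 0) ∧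
      ∀ z ∈ closedBall c (16/10), f z ≠ 0 →
        ‖logDeriv f z - (Z.map fun ρ => 1/(z-ρ)).sum‖ ≤ 1500 * B := by
  obtain ⟨Z, a1, a2, a3⟩ := local_lemma0 (f := fun z => f (z + c)) hB
    (hf.comp (by fun_prop) (by intro z hz; simpa [dist_eq_norm] using hz)) (by simpa using h0)
    (by intro z hz; simpa using hM (z + c) (by simpa [dist_eq_norm] using hz))
  refine ⟨Z.map (· + c), by simpa using a1, ?_, ?_⟩
  · intro ρ hρ
    obtain ⟨τ, hτ, rfl⟩ := List.mem_map.1 hρ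
    have := a2 τ hτ
    refine ⟨by simpa [dist_eq_norm] using this.1, this.2⟩
  · intro z hz hfz
    have := a3 (z - c) (by simpa [dist_eq_norm] using hz) (by simpa using hfz)
    have e1 : logDeriv (fun z => f (z + c)) (z - c) = logDeriv f z := by
      rw [logDeriv_apply, logDeriv_apply, deriv_comp_add_const]; simp
    rw [e1] at this
    rw [List.map_map]
    convert this using 5
    funext ρ; simp [sub_sub, add_comm]

end

section
open Metric Complex MeasureTheory Set Filter Asymptotics Topology

noncomputable def IA (A : ℝ → ℂ) (s : ℂ) : ℂ := ∫ t in Ioi (1:ℝ), A t * (t:ℂ) ^ (-(s + 1))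

lemma IA_norm {A : ℝ → ℂ} {D : ℝ} (hD : ∀ t, ‖A t‖ ≤ D) {s : ℂ} (hs : 0 < s.re) :
    ‖IA A s‖ ≤ D / s.re := by
  have h1 : ‖IA A s‖ ≤ ∫ t in Ioi (1:ℝ), D * t ^ (-s.re - 1) := by
    refine norm_integral_le_of_norm_le ?_ ?_
    · exact (integrableOn_Ioi_rpow_of_lt (by linarith) zero_lt_one).const_mul _
    · refine (ae_restrict_iff' measurableSet_Ioi).2 (ae_of_all _ fun t ht => ?_)
      have ht0 : 0 < t := zero_lt_one.trans ht
      rw [norm_mul, Complex.norm_cpow_eq_rpow_re_of_pos ht0]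
      have : (-(s+1)).re = -s.re - 1 := by simp; ring
      rw [this]
      gcongr
      exact hD t
  rw [integral_const_mul, integral_Ioi_rpow_of_lt (by linarith) zero_lt_one] at h1
  refine h1.trans (le_of_eq ?_)
  rw [Real.one_rpow, show -s.re-1+1 = -s.re by ring, neg_div_neg_eq, mul_one_div]

lemma IA_diff {A : ℝ → ℂ} {D : ℝ} (hA : Measurable A) (hD : ∀ t, ‖A t‖ ≤ D) {s : ℂ} (hs : 0 < s.re) :
    DifferentiableAt ℂ (IA A) s := by
  have h1 : IA A = fun s => mellin (indicator (Ioi 1) A) (-s) := by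
    funext s
    rw [IA, mellin]
    rw [← integral_indicator measurableSet_Ioi, ← integral_indicator measurableSet_Ioi]
    congr 1; funext t
    by_cases ht : 1 < t
    · have ht0 : 0 < t := zero_lt_one.trans ht
      rw [indicator_of_mem (by exact ht), indicator_of_mem (by exact ht0), indicator_of_mem (by exact ht)]
      rw [smul_eq_mul, mul_comm]
      congr 2; ring
    · rw [indicator_of_notMem (by exact ht)]
      by_cases ht0 : 0 < t
      · rw [indicator_of_mem (by exact ht0), indicator_of_notMem (by exact ht), smul_zero]
      · rw [indicator_of_notMem (by exact ht0)]
  rw [h1]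
  have : DifferentiableAt ℂ (mellin (indicator (Ioi 1) A)) (-s) := by
    refine mellin_differentiableAt_of_isBigO_rpow (a := 0) (b := -s.re - 1) ?_ ?_ (by simpa using hs) ?_ (by simp)
    · refine LocallyIntegrable.locallyIntegrableOn ?_ _
      refine LocallyIntegrable.mono (f := fun _ : ℝ => (D:ℝ)) (locallyIntegrable_const D) ?_ ?_
      · exact (hA.indicator measurableSet_Ioi).aestronglyMeasurable
      · refine ae_of_all _ fun t => ?_
        refine (norm_indicator_le_norm_self A t).trans ((hD t).trans (Real.le_norm_self _))
    · refine IsBigO.of_bound D (Eventually.of_forall fun t => ?_)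
      simpa using (norm_indicator_le_norm_self A t).trans (hD t)
    · refine IsBigO.of_bound 0 ?_
      have : Ioo (0:ℝ) 1 ∈ 𝓝[>] (0:ℝ) := Ioo_mem_nhdsGT zero_lt_one
      filter_upwards [this] with t ht
      rw [indicator_of_notMem (by simpa using ht.2.le)]; simp
  exact this.comp s differentiableAt_id.neg

lemma halfplane_eq {f g : ℂ → ℂ} (hf : ∀ s : ℂ, 0 < s.re → DifferentiableAt ℂ f s)
    (hg : ∀ s : ℂ, 0 < s.re → DifferentiableAt ℂ g s) (h : ∀ s : ℂ, 1 < s.re → f s = g s)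
    {s : ℂ} (hs : 0 < s.re) : f s = g s := by
  have hU : IsOpen {s : ℂ | 0 < s.re} := isOpen_lt continuous_const continuous_re
  have hV : IsOpen {s : ℂ | 1 < s.re} := isOpen_lt continuous_const continuous_re
  have a1 : AnalyticOnNhd ℂ f {s : ℂ | 0 < s.re} :=
    DifferentiableOn.analyticOnNhd (fun s hs => (hf s hs).differentiableWithinAt) hU
  have a2 : AnalyticOnNhd ℂ g {s : ℂ | 0 < s.re} :=
    DifferentiableOn.analyticOnNhd (fun s hs => (hg s hs).differentiableWithinAt) hU
  refine a1.eqOn_of_preconnected_of_eventuallyEq a2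
    ((convex_halfSpace_re_gt 0).isPreconnected) (z₀ := 2) (by simp) ?_ hs
  filter_upwards [hV.mem_nhds (show (2:ℂ) ∈ {s : ℂ | 1 < s.re} by simp)] with z hz using h z hz

lemma charsum_bound {d : ℕ} [NeZero d] (χ : DirichletCharacter ℂ d) (hχ : χ ≠ 1) (n : ℕ) :
    ‖∑ k ∈ Finset.range n, χ (k : ZMod d)‖ ≤ d := by
  have hper : ∀ m, ∑ k ∈ Finset.range d, χ ((m + k : ℕ) : ZMod d) = 0 := by
    intro m
    have h1 : ∑ k ∈ Finset.range d, χ ((m + k : ℕ) : ZMod d) = ∑ a : ZMod d, χ ((m : ZMod d) + a) := by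
      refine Finset.sum_bij' (fun k _ => (k : ZMod d)) (fun a _ => a.val) ?_ ?_ ?_ ?_ ?_
      · intros; exact Finset.mem_univ _
      · intro a _; simpa using ZMod.val_lt a
      · intro k hk; exact ZMod.val_cast_of_lt (Finset.mem_range.1 hk)
      · intro a _; simp
      · intro k _; push_cast; rfl
    rw [h1, ← MulChar.sum_eq_zero_of_ne_one hχ]
    exact Fintype.sum_equiv (Equiv.addLeft (m : ZMod d)) _ _ (fun _ => rfl)
  have hstep : ∀ n, ∑ k ∈ Finset.range (n + d), χ (k : ZMod d) = ∑ k ∈ Finset.range n, χ (k : ZMod d) := by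
    intro n
    rw [Finset.sum_range_add, hper, add_zero]
  induction n using Nat.strong_induction_on with
  | _ n ih =>
    by_cases h : n < d
    · refine (norm_sum_le _ _).trans ?_
      refine (Finset.sum_le_sum (fun k _ => χ.norm_le_one _)).trans ?_
      simp; exact_mod_cast h.le
    · have hd : 0 < d := Nat.pos_of_ne_zero (NeZero.ne d)
      have := ih (n - d) (by omega)
      rw [← hstep (n - d), Nat.sub_add_cancel (by omega)] at this
      exact this

lemma charsum_bound' {d : ℕ} [NeZero d] (χ : DirichletCharacter ℂ d) (hχ : χ ≠ 1) (n : ℕ) :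
    ‖∑ k ∈ Finset.Icc 1 n, χ (k : ZMod d)‖ ≤ d + 1 := by
  have h : ∑ k ∈ Finset.range (n+1), χ (k : ZMod d) = χ ((0:ℕ) : ZMod d) + ∑ k ∈ Finset.Icc 1 n, χ (k : ZMod d) := by
    rw [Finset.range_eq_Ico, Finset.sum_eq_sum_Ico_succ_bot (by omega)]
    rfl
  have h2 : ∑ k ∈ Finset.Icc 1 n, χ (k : ZMod d) = ∑ k ∈ Finset.range (n+1), χ (k : ZMod d) - χ ((0:ℕ) : ZMod d) := by
    rw [h]; ring
  rw [h2]
  exact (norm_sub_le _ _).trans (add_le_add (charsum_bound χ hχ _) (χ.norm_le_one _))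

lemma LFunction_bound {d : ℕ} [NeZero d] (χ : DirichletCharacter ℂ d) (hχ : χ ≠ 1) {s : ℂ}
    (hs : 0 < s.re) : ‖DirichletCharacter.LFunction χ s‖ ≤ ‖s‖ * ((d + 1) / s.re) := by
  set A : ℝ → ℂ := fun t => ∑ k ∈ Finset.Icc 1 ⌊t⌋₊, χ (k : ZMod d) with hA
  have hAm : Measurable A := by
    exact (measurable_from_nat (f := fun n : ℕ => ∑ k ∈ Finset.Icc 1 n, χ (k : ZMod d))).comp Nat.measurable_floor
  have hAD : ∀ t, ‖A t‖ ≤ (d:ℝ) + 1 := fun t => charsum_bound' χ hχ _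
  have key : DirichletCharacter.LFunction χ s = s * IA A s := by
    refine halfplane_eq (f := DirichletCharacter.LFunction χ) (g := fun s => s * IA A s) ?_ ?_ ?_ hs
    · intro s _; exact DirichletCharacter.differentiable_LFunction hχ s
    · intro s hs; exact differentiableAt_id.mul (IA_diff hAm hAD hs)
    · intro s hs
      rw [DirichletCharacter.LFunction_eq_LSeries χ hs]
      refine LSeries_eq_mul_integral _ (r := 0) le_rfl (by linarith)
        (DirichletCharacter.LSeriesSummable_of_one_lt_re χ hs) ?_
      refine IsBigO.of_bound (d+1) (Eventually.of_forall fun n => ?_)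
      simpa using charsum_bound' χ hχ n
  rw [key, norm_mul]
  gcongr
  exact IA_norm hAD hs

noncomputable def Z1 : ℂ → ℂ := DirichletCharacter.LFunctionTrivChar₁ 1

lemma Z1_of_ne {s : ℂ} (hs : s ≠ 1) : Z1 s = (s - 1) * riemannZeta s := by
  simp [Z1, DirichletCharacter.LFunctionTrivChar₁, Function.update_of_ne hs, DirichletCharacter.LFunctionTrivChar]

lemma Z1_diff : Differentiable ℂ Z1 := DirichletCharacter.differentiable_LFunctionTrivChar₁ 1

lemma Z1_bound {s : ℂ} (hs : 0 < s.re) : ‖Z1 s‖ ≤ ‖s‖ + ‖s‖ * ‖s - 1‖ / s.re := by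
  set A : ℝ → ℂ := fun t => ((Int.fract t : ℝ) : ℂ) with hA
  have hAm : Measurable A := measurable_ofReal.comp measurable_fract
  have hAD : ∀ t, ‖A t‖ ≤ 1 := fun t => by
    simp only [hA, Complex.norm_real, Real.norm_eq_abs, Int.abs_fract]; exact (Int.fract_lt_one t).le
  have key : Z1 s = s - s * (s - 1) * IA A s := by
    refine halfplane_eq (f := Z1) (g := fun s => s - s * (s - 1) * IA A s) ?_ ?_ ?_ hs
    · intro s _; exact Z1_diff s
    · intro s hs; exact differentiableAt_id.sub ((by fun_prop : DifferentiableAt ℂ (fun s : ℂ => s * (s-1)) s).mul (IA_diff hAm hAD hs))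
    · intro s hs
      have hs1 : s ≠ 1 := by rintro rfl; simp at hs
      have hs1' : s - 1 ≠ 0 := sub_ne_zero.2 hs1
      rw [Z1_of_ne hs1, ← LSeries_one_eq_riemannZeta hs]
      rw [LSeries_eq_mul_integral' 1 (r := 1) zero_le_one hs (by
        refine IsBigO.of_bound 1 (Eventually.of_forall fun n => ?_)
        simp)]
      have e1 : ∫ t in Ioi (1:ℝ), (∑ k ∈ Finset.Icc 1 ⌊t⌋₊, (1 : ℕ → ℂ) k) * (t:ℂ) ^ (-(s + 1)) =
          ∫ t in Ioi (1:ℝ), ((t:ℂ) ^ (-s) - A t * (t:ℂ)^(-(s+1))) := by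
        refine setIntegral_congr_fun measurableSet_Ioi fun t ht => ?_
        have ht0 : 0 < t := zero_lt_one.trans ht
        have e2 : ∑ k ∈ Finset.Icc 1 ⌊t⌋₊, (1 : ℕ → ℂ) k = (⌊t⌋₊ : ℂ) := by simp
        have e3 : ((⌊t⌋₊ : ℕ) : ℂ) = t - A t := by
          have : ((⌊t⌋₊ : ℕ) : ℝ) = t - Int.fract t := by
            rw [natCast_floor_eq_intCast_floor ht0.le, Int.self_sub_fract]
          simp only [hA]
          rw [← ofReal_sub, ← this]; simp
        have e4 : (t:ℂ) ^ (-s) = t * (t:ℂ) ^ (-(s+1)) := by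
          rw [show -s = 1 + (-(s+1)) by ring, cpow_add _ _ (by exact_mod_cast ht0.ne'), cpow_one]
        beta_reduce
        rw [e2, e3, e4]; ring
      have i1 : IntegrableOn (fun t : ℝ => (t:ℂ) ^ (-s)) (Ioi 1) :=
        integrableOn_Ioi_cpow_of_lt (by simpa using hs) zero_lt_one
      have i2 : IntegrableOn (fun t : ℝ => A t * (t:ℂ) ^ (-(s+1))) (Ioi 1) := by
        refine Integrable.bdd_mul (c := 1) (integrableOn_Ioi_cpow_of_lt (by simp; linarith) zero_lt_one)
          hAm.aestronglyMeasurable (ae_of_all _ hAD)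
      rw [e1, integral_sub i1 i2, integral_Ioi_cpow_of_lt (by simpa using hs) zero_lt_one]
      rw [IA]
      have : -s + 1 ≠ 0 := by intro h; apply hs1'; linear_combination -h
      simp
      field_simp
      ring
  rw [key]
  refine (norm_sub_le _ _).trans ?_
  rw [norm_mul, norm_mul]
  have := IA_norm hAD hs
  have h2 : ‖s‖ * ‖s - 1‖ * ‖IA A s‖ ≤ ‖s‖ * ‖s - 1‖ * (1 / s.re) := by gcongr
  rw [mul_one_div] at h2
  linarith

end

section
open Metric Complex MeasureTheory Set Filter Asymptotics Topology

lemma LFunction_lower {N : ℕ} [NeZero N] (χ : DirichletCharacter ℂ N) {s : ℂ} (hs : s.re = 2) :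
    1 / 4 ≤ ‖DirichletCharacter.LFunction χ s‖ := by
  have hs1 : 1 < s.re := by rw [hs]; norm_num
  rw [DirichletCharacter.LFunction_eq_LSeries χ hs1]
  have hsum := DirichletCharacter.LSeriesSummable_of_one_lt_re χ hs1
  have hz := hasSum_zeta_two
  have hb : ∀ n : ℕ, ‖LSeries.term (fun n => χ n) s n‖ ≤ 1 / (n:ℝ)^2 := by
    intro n
    rcases Nat.eq_zero_or_pos n with rfl | hn
    · simp
    · rw [LSeries.term_of_ne_zero hn.ne', norm_div, Complex.norm_natCast_cpow_of_pos hn, hs]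
      have := χ.norm_le_one (n : ZMod N)
      rw [Real.rpow_two]
      gcongr
  have h2 : LSeries (fun n => χ n) s = LSeries.term (fun n => χ n) s 0 + LSeries.term (fun n => χ n) s 1 +
      ∑' n, LSeries.term (fun n => χ n) s (n+2) := by
    rw [LSeries, ← hsum.sum_add_tsum_nat_add 2, Finset.sum_range_succ, Finset.sum_range_one]
  have h3 : ∑' n:ℕ, 1 / ((n+2:ℕ):ℝ)^2 = Real.pi^2/6 - 1 := by
    have := hz.summable.sum_add_tsum_nat_add 2
    rw [hz.tsum_eq, Finset.sum_range_succ, Finset.sum_range_one] at this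
    norm_num at this ⊢; linarith
  have h4 : ‖∑' n, LSeries.term (fun n => χ n) s (n+2)‖ ≤ Real.pi^2/6 - 1 := by
    rw [← h3]
    refine tsum_of_norm_bounded ((summable_nat_add_iff 2).2 hz.summable).hasSum (fun n => hb (n+2))
  have h5 : LSeries (fun n => χ n) s = 1 + ∑' n, LSeries.term (fun n => χ n) s (n+2) := by
    rw [h2]; simp [LSeries.term]
  rw [h5]
  have h6 : ‖(1:ℂ)‖ ≤ ‖1 + ∑' n, LSeries.term (fun n => χ n) s (n+2)‖ + ‖∑' n, LSeries.term (fun n => χ n) s (n+2)‖ := by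
    have := norm_sub_le (1 + ∑' n, LSeries.term (fun n => χ n) s (n+2)) (∑' n, LSeries.term (fun n => χ n) s (n+2))
    rwa [add_sub_cancel_right] at this
  rw [norm_one] at h6
  have := Real.pi_lt_d2
  have := Real.pi_pos
  nlinarith

noncomputable def ff {d : ℕ} [NeZero d] (χ : DirichletCharacter ℂ d) (s : ℂ) : ℂ :=
  Z1 s * DirichletCharacter.LFunction χ s

noncomputable def lg (d : ℕ) (T : ℝ) : ℝ := Real.log (d * (|T| + 2))

section
variable {d : ℕ} [NeZero d] (χ : DirichletCharacter ℂ d) (hχ : χ ≠ 1)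
include hχ

lemma ff_diff : Differentiable ℂ (ff χ) := fun s =>
  (Z1_diff s).mul (DirichletCharacter.differentiable_LFunction hχ s)

lemma ff_upper {T : ℝ} {z : ℂ} (hz : z ∈ closedBall ((2:ℂ) + T * I) (9/5)) :
    ‖ff χ z‖ ≤ 520 * (d * (|T| + 2)^3) := by
  rw [mem_closedBall, dist_eq] at hz
  have hd : (1:ℝ) ≤ d := by exact_mod_cast Nat.pos_of_ne_zero (NeZero.ne d)
  have hre : 1/5 ≤ z.re := by
    have := (abs_le.1 ((Complex.abs_re_le_norm _).trans hz)).1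
    simp at this; linarith
  have hn : ‖z‖ ≤ |T| + 4 := by
    have h1 : ‖z‖ ≤ ‖z - (2 + T * I)‖ + ‖(2 + T * I : ℂ)‖ := by
      simpa using norm_add_le (z - (2 + T * I)) (2 + T*I)
    have h2 : ‖(2 + T * I : ℂ)‖ ≤ 2 + |T| := by
      refine (norm_add_le _ _).trans ?_
      simp
    linarith
  have hn1 : ‖z - 1‖ ≤ |T| + 5 := by
    have := norm_sub_le z 1
    rw [norm_one] at this; linarith
  have hT := abs_nonneg T
  set τ := |T| + 2
  have a1 : ‖z‖ ≤ 2 * τ := by linarith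
  have a2 : ‖z - 1‖ ≤ 2.5 * τ := by linarith
  have hτ : 2 ≤ τ := by linarith
  have b1 : ‖DirichletCharacter.LFunction χ z‖ ≤ 20 * (τ * d) := by
    refine (LFunction_bound χ hχ (by linarith)).trans ?_
    calc ‖z‖ * ((d+1)/z.re) ≤ (2 * τ) * ((d + d) / (1/5)) := by gcongr
      _ = _ := by ring
  have b2 : ‖Z1 z‖ ≤ 26 * τ^2 := by
    refine (Z1_bound (by linarith)).trans ?_
    calc ‖z‖ + ‖z‖ * ‖z-1‖/z.re ≤ 2 * τ + (2*τ) * (2.5*τ) / (1/5) := by gcongr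
      _ ≤ _ := by nlinarith
  rw [ff, norm_mul]
  calc _ ≤ (26 * τ^2) * (20 * (τ * d)) := by gcongr
    _ = _ := by ring

lemma ff_lower {T : ℝ} : 1/16 ≤ ‖ff χ ((2:ℂ) + T * I)‖ := by
  have h2 : ((2:ℂ) + T * I).re = 2 := by simp
  have hne : (2:ℂ) + T * I ≠ 1 := by
    intro h; have := congrArg Complex.re h; simp at this
  have h1 := LFunction_lower (1 : DirichletCharacter ℂ 1) h2
  rw [DirichletCharacter.LFunction_modOne_eq] at h1
  have h3 := LFunction_lower χ h2
  have h4 : 1 ≤ ‖(2:ℂ) + T * I - 1‖ := by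
    have := Complex.abs_re_le_norm ((2:ℂ) + T * I - 1)
    simp at this; norm_num at this; simpa using this
  rw [ff, norm_mul, Z1_of_ne hne, norm_mul]
  calc (1:ℝ)/16 = 1 * (1/4) * (1/4) := by norm_num
    _ ≤ _ := by gcongr

omit hχ in
lemma two_le_dt (T : ℝ) : (2:ℝ) ≤ d * (|T| + 2) := by
  have hd : (1:ℝ) ≤ d := by exact_mod_cast Nat.pos_of_ne_zero (NeZero.ne d)
  nlinarith [abs_nonneg T]

omit hχ in
lemma lg_pos (T : ℝ) : 0 < lg d T := Real.log_pos (by linarith [two_le_dt (d := d) T])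

lemma local_f (hz : ∀ s : ℂ, 0 < s.re → ff χ s = 0 → s.re = 1/2) (T : ℝ) :
    ∃ Z : List ℂ, (Z.length:ℝ) ≤ 25500 * lg d T ∧ (∀ ρ ∈ Z, ρ.re = 1/2) ∧
      ∀ s : ℂ, 1/2 < s.re → s.re ≤ 2 → |s.im - T| ≤ 1/2 →
        ‖logDeriv (ff χ) s - (Z.map fun ρ => 1/(s-ρ)).sum‖ ≤ 25500 * lg d T := by
  have hlg := lg_pos (d := d) T
  have h0 := ff_lower χ hχ (T := T)
  obtain ⟨Z, hZ1, hZ2, hZ3⟩ := local_lemma (f := ff χ) (B := 17 * lg d T) (c := 2 + T * I) (by linarith)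
    ((ff_diff χ hχ).differentiableOn) (by intro h; rw [h] at h0; norm_num at h0) (by
      intro z hz
      refine (ff_upper χ hχ hz).trans ?_
      have e : Real.exp (17 * lg d T) = (d * (|T|+2))^17 := by
        rw [lg, mul_comm, Real.exp_mul, Real.exp_log (by linarith [two_le_dt (d := d) T])]
        norm_cast
      rw [e]
      have hd : (1:ℝ) ≤ d := by exact_mod_cast Nat.pos_of_ne_zero (NeZero.ne d)
      have h2 := two_le_dt (d := d) T
      set y : ℝ := d * (|T|+2) with hy
      have hT : 0 < |T| + 2 := by positivity
      have h3 : d * (|T|+2)^3 ≤ y^3 := by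
        rw [hy, mul_pow]
        gcongr
        nlinarith [mul_self_nonneg ((d:ℝ) - 1), sq_nonneg (d:ℝ)]
      have h4 : (2:ℝ)^14 ≤ y^14 := by gcongr
      calc 520 * (d * (|T|+2)^3) ≤ 520 * y^3 := by gcongr
        _ ≤ 1/16 * (2^14 * y^3) := by nlinarith [show 0 ≤ y^3 by positivity]
        _ ≤ 1/16 * (y^14 * y^3) := by gcongr
        _ = 1/16 * y^17 := by ring
        _ ≤ _ := by gcongr)
  refine ⟨Z, by linarith, ?_, ?_⟩
  · intro ρ hρ
    obtain ⟨h1, h2⟩ := hZ2 ρ hρ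
    refine hz ρ ?_ h2
    rw [mem_closedBall, dist_eq] at h1
    have := (abs_le.1 ((Complex.abs_re_le_norm _).trans h1)).1
    simp at this; linarith
  · intro s h1 h2 h3
    have := hZ3 s ?_ ?_
    · linarith
    · rw [mem_closedBall, dist_eq, Complex.norm_def]
      refine Real.sqrt_le_iff.2 ⟨by norm_num, ?_⟩
      rw [normSq_apply]
      simp
      have := abs_le.1 h3
      nlinarith
    · intro h
      have := hz s (by linarith) h
      linarith

lemma list_norm_sum {g : ℂ → ℂ} {M : ℝ} (Z : List ℂ) (h : ∀ ρ ∈ Z, ‖g ρ‖ ≤ M) :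
    ‖(Z.map g).sum‖ ≤ Z.length * M := by
  induction Z with
  | nil => simp
  | cons a l ih =>
    simp only [List.map_cons, List.sum_cons, List.length_cons]
    have h1 := ih (fun ρ hρ => h ρ (List.mem_cons_of_mem _ hρ))
    have h2 := h a List.mem_cons_self
    refine (norm_add_le _ _).trans ?_
    push_cast
    linarith

lemma logDeriv_pointwise (hz : ∀ s : ℂ, 0 < s.re → ff χ s = 0 → s.re = 1/2) {s : ℂ}
    (h1 : 1/2 < s.re) (h2 : s.re ≤ 2) :
    ‖logDeriv (ff χ) s‖ ≤ 25500 * lg d s.im * (1 + 1/(s.re - 1/2)) := by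
  obtain ⟨Z, hZ1, hZ2, hZ3⟩ := local_f χ hχ hz s.im
  have h3 := hZ3 s h1 h2 (by simp)
  have hε : 0 < s.re - 1/2 := by linarith
  have h4 : ‖(Z.map fun ρ => 1/(s-ρ)).sum‖ ≤ Z.length * (1/(s.re - 1/2)) := by
    refine list_norm_sum χ hχ Z fun ρ hρ => ?_
    rw [norm_div, norm_one]
    have : s.re - 1/2 ≤ ‖s - ρ‖ := by
      have := Complex.re_le_norm (s - ρ)
      rwa [sub_re, hZ2 ρ hρ] at this
    gcongr
  have h5 : ‖logDeriv (ff χ) s‖ ≤ ‖logDeriv (ff χ) s - (Z.map fun ρ => 1/(s-ρ)).sum‖ + ‖(Z.map fun ρ => 1/(s-ρ)).sum‖ := by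
    simpa using norm_add_le (logDeriv (ff χ) s - (Z.map fun ρ => 1/(s-ρ)).sum) (Z.map fun ρ => 1/(s-ρ)).sum
  have h6 : Z.length * (1/(s.re - 1/2)) ≤ 25500 * lg d s.im * (1/(s.re - 1/2)) := by gcongr
  linarith
end

lemma poisson_int {ε : ℝ} (hε : 0 < ε) (γ a b : ℝ) (_hab : a ≤ b) :
    ∫ v in a..b, ε / (ε^2 + (v - γ)^2) ≤ Real.pi := by
  have h : ∀ v, HasDerivAt (fun v => Real.arctan ((v - γ)/ε)) (ε / (ε^2 + (v - γ)^2)) v := by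
    intro v
    have h1 : HasDerivAt (fun v : ℝ => (v - γ)/ε) (1/ε) v := ((hasDerivAt_id v).sub_const γ).div_const ε
    refine (h1.arctan).congr_deriv ?_
    field_simp
  rw [intervalIntegral.integral_eq_sub_of_hasDerivAt (fun v _ => h v)]
  · linarith [Real.arctan_lt_pi_div_two ((b - γ)/ε), Real.neg_pi_div_two_lt_arctan ((a - γ)/ε)]
  · apply Continuous.intervalIntegrable
    refine continuous_const.div (by fun_prop) fun v => by positivity

lemma poisson_list {ε : ℝ} (hε : 0 < ε) (a b : ℝ) (hab : a ≤ b) (Z : List ℂ) :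
    IntervalIntegrable (fun v => (Z.map fun ρ => ε / (ε^2 + (v - ρ.im)^2)).sum) volume a b ∧
    ∫ v in a..b, (Z.map fun ρ => ε / (ε^2 + (v - ρ.im)^2)).sum ≤ Z.length * Real.pi := by
  induction Z with
  | nil => simp
  | cons r l ih =>
    simp only [List.map_cons, List.sum_cons, List.length_cons]
    have i1 : IntervalIntegrable (fun v => ε / (ε^2 + (v - r.im)^2)) volume a b := by
      apply Continuous.intervalIntegrable
      refine continuous_const.div (by fun_prop) fun v => by positivity
    refine ⟨i1.add ih.1, ?_⟩
    rw [intervalIntegral.integral_add i1 ih.1]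
    have := poisson_int hε r.im a b hab
    push_cast
    linarith [ih.2]

lemma list_re_bound {ε v : ℝ} (hε : 0 < ε) (Z : List ℂ) (hZ : ∀ ρ ∈ Z, ρ.re = 1/2) :
    |((Z.map fun ρ => 1/(((1/2 + ε : ℝ) : ℂ) + v * I - ρ)).sum).re| ≤
      (Z.map fun ρ => ε / (ε^2 + (v - ρ.im)^2)).sum := by
  induction Z with
  | nil => simp
  | cons r l ih =>
    simp only [List.map_cons, List.sum_cons, add_re]
    have h1 := ih (fun ρ hρ => hZ ρ (List.mem_cons_of_mem _ hρ))
    have h2 := hZ r List.mem_cons_self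
    refine (abs_add_le _ _).trans (add_le_add (le_of_eq ?_) h1)
    rw [one_div, inv_re, normSq_apply]
    have e1 : (((1/2 + ε : ℝ) : ℂ) + v * I - r).re = ε := by
      rw [sub_re, h2]; simp
    have e2 : (((1/2 + ε : ℝ) : ℂ) + v * I - r).im = v - r.im := by simp
    rw [e1, e2, show ε * ε + (v - r.im) * (v - r.im) = ε^2 + (v - r.im)^2 by ring, abs_of_nonneg (by positivity)]

lemma logDeriv_avg {d : ℕ} [NeZero d] (χ : DirichletCharacter ℂ d) (hχ : χ ≠ 1)
    (hz : ∀ s : ℂ, 0 < s.re → ff χ s = 0 → s.re = 1/2) {ε : ℝ} (hε : 0 < ε) (hε2 : ε ≤ 3/2) (T : ℝ) :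
    ∫ v in (T-1/2)..(T+1/2), |(logDeriv (ff χ) (((1/2 + ε : ℝ) : ℂ) + v * I)).re| ≤ 127500 * lg d T := by
  obtain ⟨Z, hZ1, hZ2, hZ3⟩ := local_f χ hχ hz T
  obtain ⟨p1, p2⟩ := poisson_list hε (T-1/2) (T+1/2) (by linarith) Z
  have hlg := lg_pos (d := d) T
  have hm : ∫ v in (T-1/2)..(T+1/2), |(logDeriv (ff χ) (((1/2 + ε : ℝ) : ℂ) + v * I)).re| ≤
      ∫ v in (T-1/2)..(T+1/2), (25500 * lg d T + (Z.map fun ρ => ε / (ε^2 + (v - ρ.im)^2)).sum) := by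
    refine intervalIntegral.integral_mono_on_of_le_Ioo (by linarith) ?_ (intervalIntegrable_const.add p1) ?_
    · apply Continuous.intervalIntegrable
      refine (continuous_re.comp ?_).abs
      refine continuous_iff_continuousAt.2 fun v => ?_
      have hne : ff χ (((1/2 + ε : ℝ) : ℂ) + v * I) ≠ 0 := by
        intro h
        have := hz _ (by simp; linarith) h
        simp at this; linarith
      have : ContinuousAt (logDeriv (ff χ)) (((1/2 + ε : ℝ) : ℂ) + v * I) := by
        refine ContinuousAt.div ?_ (ff_diff χ hχ).continuous.continuousAt hne
        exact ((ff_diff χ hχ).contDiff (n := 1)).continuous_deriv le_rfl |>.continuousAt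
      exact ContinuousAt.comp' (f := fun v : ℝ => ((1/2 + ε : ℝ) : ℂ) + v * I) this (by fun_prop)
    · intro v hv
      have h1 := hZ3 (((1/2 + ε : ℝ) : ℂ) + v * I) (by simp; linarith) (by simp; linarith) (by
        simp only [add_im, ofReal_im, mul_im, ofReal_re, I_im, I_re]
        rw [abs_le]; constructor <;> [linarith [hv.1]; linarith [hv.2]])
      have h2 := list_re_bound (v := v) hε Z hZ2
      have h3 := (Complex.abs_re_le_norm _).trans h1
      rw [sub_re] at h3
      have h4 := abs_sub_abs_le_abs_sub (logDeriv (ff χ) (((1/2 + ε : ℝ) : ℂ) + v * I)).re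
        ((Z.map fun ρ => 1/(((1/2 + ε : ℝ) : ℂ) + v * I - ρ)).sum).re
      linarith
  refine hm.trans ?_
  rw [intervalIntegral.integral_add intervalIntegrable_const p1, intervalIntegral.integral_const]
  have : Z.length * Real.pi ≤ 25500 * lg d T * 4 := by
    gcongr
    exact Real.pi_le_four
  simp only [smul_eq_mul]
  linarith

end

section
open Metric Complex MeasureTheory Set Filter Asymptotics Topology

noncomputable def aa {d : ℕ} (χ : DirichletCharacter ℂ d) (n : ℕ) : ℝ :=
  ArithmeticFunction.vonMangoldt n * (1 + (χ n).re)

lemma aa_nonneg {d : ℕ} (χ : DirichletCharacter ℂ d) (n : ℕ) : 0 ≤ aa χ n := by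
  have h1 := (Complex.abs_re_le_norm (χ n)).trans (χ.norm_le_one n)
  have := (abs_le.1 h1).1
  exact mul_nonneg ArithmeticFunction.vonMangoldt_nonneg (by linarith)

lemma aa_eq {d : ℕ} (χ : DirichletCharacter ℂ d) (hr : ∀ a, (χ a).im = 0) :
    (fun n => ((aa χ n : ℝ) : ℂ)) = (fun n : ℕ => ((ArithmeticFunction.vonMangoldt n : ℝ) : ℂ)) +
      ((fun n : ℕ => χ n) * fun n : ℕ => ((ArithmeticFunction.vonMangoldt n : ℝ) : ℂ)) := by
  funext n
  have : χ n = (((χ n).re : ℝ) : ℂ) := by apply Complex.ext <;> simp [hr]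
  simp only [Pi.add_apply, Pi.mul_apply]
  rw [aa]; push_cast; rw [← this]; ring

lemma aa_summable {d : ℕ} (χ : DirichletCharacter ℂ d) (hr : ∀ a, (χ a).im = 0) {s : ℂ} (hs : 1 < s.re) :
    LSeriesSummable (fun n => ((aa χ n : ℝ) : ℂ)) s := by
  rw [aa_eq χ hr]
  exact (ArithmeticFunction.LSeriesSummable_vonMangoldt hs).add
    (DirichletCharacter.LSeriesSummable_twist_vonMangoldt χ hs)

lemma ff_ne_one_le {d : ℕ} [NeZero d] (χ : DirichletCharacter ℂ d) (hχ : χ ≠ 1) {s : ℂ} (hs : 1 ≤ s.re) :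
    ff χ s ≠ 0 := by
  refine mul_ne_zero ?_ (DirichletCharacter.LFunction_ne_zero_of_one_le_re χ (Or.inl hχ) hs)
  by_cases h : s = 1
  · rw [h]; exact DirichletCharacter.LFunctionTrivChar₁_apply_one_ne_zero 1
  · rw [Z1_of_ne h]
    exact mul_ne_zero (sub_ne_zero.2 h) (riemannZeta_ne_zero_of_one_le_re hs)

lemma ff_zeros (hGRH : ∀ (N : ℕ) [NeZero N] (χ : DirichletCharacter ℂ N), (∀ a : ZMod N, (χ a).im = 0) →
    ∀ s : ℂ, DirichletCharacter.LFunction χ s = 0 → 0 < s.re → s.re < 1 → s.re = 1 / 2)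
    {d : ℕ} [NeZero d] (χ : DirichletCharacter ℂ d) (hχ : χ ≠ 1) (hr : ∀ a, (χ a).im = 0) (s : ℂ)
    (hs : 0 < s.re) (h : ff χ s = 0) : s.re = 1/2 := by
  have h1 : s.re < 1 := by
    by_contra h1
    exact ff_ne_one_le χ hχ (not_lt.1 h1) h
  have hne : s ≠ 1 := by rintro rfl; simp at h1
  rcases mul_eq_zero.1 h with h2 | h2
  · rw [Z1_of_ne hne] at h2
    rcases mul_eq_zero.1 h2 with h3 | h3
    · exact absurd (sub_eq_zero.1 h3) hne
    · refine hGRH 1 1 (fun a => ?_) s ?_ hs h1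
      · rw [Subsingleton.elim a 1]; simp
      · rw [DirichletCharacter.LFunction_modOne_eq]; exact h3
  · exact hGRH d χ hr s h2 hs h1

lemma ff_series {d : ℕ} [NeZero d] (χ : DirichletCharacter ℂ d) (hχ : χ ≠ 1) (hr : ∀ a, (χ a).im = 0)
    {s : ℂ} (hs : 1 < s.re) :
    -logDeriv (ff χ) s = LSeries (fun n => ((aa χ n : ℝ) : ℂ)) s - 1/(s-1) := by
  have hne : s ≠ 1 := by rintro rfl; simp at hs
  have hz := riemannZeta_ne_zero_of_one_le_re hs.le
  rw [aa_eq χ hr, LSeries_add (ArithmeticFunction.LSeriesSummable_vonMangoldt hs)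
    (DirichletCharacter.LSeriesSummable_twist_vonMangoldt χ hs),
    ArithmeticFunction.LSeries_vonMangoldt_eq_deriv_riemannZeta_div hs,
    DirichletCharacter.LSeries_twist_vonMangoldt_eq χ hs,
    ← DirichletCharacter.deriv_LFunction_eq_deriv_LSeries χ hs, ← DirichletCharacter.LFunction_eq_LSeries χ hs]
  have hZne : Z1 s ≠ 0 := by rw [Z1_of_ne hne]; exact mul_ne_zero (sub_ne_zero.2 hne) hz
  have e1 : logDeriv (ff χ) s = logDeriv Z1 s + logDeriv (DirichletCharacter.LFunction χ) s :=
    logDeriv_mul s hZne (DirichletCharacter.LFunction_ne_zero_of_one_le_re χ (Or.inl hχ) hs.le) (Z1_diff s)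
      (DirichletCharacter.differentiable_LFunction hχ s)
  have hev : Z1 =ᶠ[𝓝 s] fun z => (z - 1) * riemannZeta z := by
    filter_upwards [isOpen_ne.mem_nhds hne] with z hz using Z1_of_ne hz
  have e2 : logDeriv Z1 s = logDeriv (fun z : ℂ => (z - 1) * riemannZeta z) s := by
    rw [logDeriv_apply, logDeriv_apply, hev.deriv_eq, hev.eq_of_nhds]
  have e3 : logDeriv (fun z : ℂ => (z - 1) * riemannZeta z) s = 1/(s-1) + logDeriv riemannZeta s := by
    rw [logDeriv_mul (f := fun z : ℂ => z - 1) s (sub_ne_zero.2 hne) hz (by fun_prop) (differentiableAt_riemannZeta hne)]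
    congr 1
    rw [logDeriv_apply]; simp
  rw [e1, e2, e3, logDeriv_apply, logDeriv_apply]
  ring

end

section
open Metric Complex MeasureTheory Set Filter Asymptotics Topology

structure KernelPair (w : ℝ → ℝ) (k : ℂ → ℂ) : Prop where
  cont : Continuous w
  zero : ∀ u ≤ 1, w u = 0
  mel : ∀ s : ℂ, 0 < s.re → HasMellin (fun u => (w u : ℂ)) s (k s)
  diff : ∀ s : ℂ, 0 < s.re → DifferentiableAt ℂ k s
  decay : ∀ ε > 0, ∃ M : ℝ, 0 ≤ M ∧ ∀ s : ℂ, ε ≤ s.re → s.re ≤ 2 → ‖k s‖ ≤ M * (1 + s.im^2)⁻¹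
  conj : ∀ s : ℂ, k ((starRingEnd ℂ) s) = (starRingEnd ℂ) (k s)

lemma line_re (c t : ℝ) : ((c:ℂ) + t * I).re = c := by simp
lemma line_im (c t : ℝ) : ((c:ℂ) + t * I).im = t := by simp

section
variable {w : ℝ → ℝ} {k : ℂ → ℂ} (hk : KernelPair w k)
include hk

lemma k_cont {c : ℝ} (hc : 0 < c) : Continuous fun t : ℝ => k (c + t * I) := by
  refine continuous_iff_continuousAt.2 fun t => ?_
  exact ContinuousAt.comp' (f := fun t : ℝ => (c:ℂ) + t * I) (hk.diff _ (by simpa using hc)).continuousAt (by fun_prop)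

lemma k_int {c : ℝ} (hc : 0 < c) (hc2 : c ≤ 2) : Integrable fun t : ℝ => k (c + t * I) := by
  obtain ⟨M, hM0, hM⟩ := hk.decay c hc
  refine Integrable.mono' (integrable_inv_one_add_sq.const_mul M) (k_cont hk hc).aestronglyMeasurable (ae_of_all _ fun t => ?_)
  simpa using hM (c + t * I) (by simp) (by simpa using hc2)

lemma k_inv {c : ℝ} (hc : 0 < c) (hc2 : c ≤ 2) {u : ℝ} (hu : 0 < u) :
    ∫ t : ℝ, (u:ℂ) ^ (-((c:ℂ) + t * I)) * k (c + t * I) = 2 * Real.pi * w u := by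
  have e : ∀ t : ℝ, mellin (fun u => (w u : ℂ)) (c + t * I) = k (c + t * I) := fun t =>
    (hk.mel (c + t * I) (by simpa using hc)).2
  have h := mellinInv_mellin_eq c (fun u => (w u : ℂ)) hu (hk.mel c (by simpa using hc)).1 (by
    unfold VerticalIntegrable
    simp only [e]
    exact k_int hk hc hc2) (by exact (continuous_ofReal.comp hk.cont).continuousAt)
  rw [mellinInv] at h
  simp only [e, smul_eq_mul, real_smul] at h
  rw [← h]
  have : (2 * Real.pi : ℂ) ≠ 0 := by simp [Real.pi_ne_zero]
  push_cast
  rw [← mul_assoc, mul_one_div_cancel this, one_mul]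

lemma KK_inv {ε : ℝ} (hε : 0 < ε) (hε1 : ε ≤ 1) {u : ℝ} (hu : 1 ≤ u) :
    ∫ t : ℝ, (u:ℂ) ^ (-(((1 + ε : ℝ):ℂ) + t * I)) * (k (((1 + ε : ℝ):ℂ) + t * I) +
      k (2 * ((1/2 + ε : ℝ) : ℂ) - (((1 + ε : ℝ):ℂ) + t * I))) = 2 * Real.pi * w u := by
  have hu0 : 0 < u := by linarith
  have huC : (u:ℂ) ≠ 0 := by exact_mod_cast hu0.ne'
  have h1 := k_inv hk (c := 1 + ε) (by linarith) (by linarith) hu0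
  have h2 := k_inv hk (c := ε) hε (by linarith) (inv_pos.2 hu0)
  rw [hk.zero u⁻¹ (inv_le_one_of_one_le₀ hu)] at h2
  have nrm : ∀ (c : ℝ) (t : ℝ), ‖(u:ℂ) ^ (-((c:ℂ) + t * I))‖ = u ^ (-c) := by
    intro c t
    rw [Complex.norm_cpow_eq_rpow_re_of_pos hu0]; simp
  have cnt : ∀ c : ℝ, Continuous fun t : ℝ => (u:ℂ) ^ (-((c:ℂ) + t * I)) := by
    intro c
    exact Continuous.const_cpow (by fun_prop) (Or.inl huC)
  have e3 : ∀ t : ℝ, 2 * ((1/2 + ε : ℝ) : ℂ) - (((1 + ε : ℝ):ℂ) + t * I) = (ε:ℂ) + ((-t : ℝ):ℂ) * I := by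
    intro t; push_cast; ring
  have i1 : Integrable fun t : ℝ => (u:ℂ) ^ (-(((1 + ε : ℝ):ℂ) + t * I)) * k (((1 + ε : ℝ):ℂ) + t * I) :=
    (k_int hk (by linarith) (by linarith)).bdd_mul (c := u ^ (-(1+ε))) (cnt _).aestronglyMeasurable
      (ae_of_all _ fun t => (nrm _ t).le)
  have i2 : Integrable fun t : ℝ => (u:ℂ) ^ (-(((1 + ε : ℝ):ℂ) + t * I)) *
      k (2 * ((1/2 + ε : ℝ) : ℂ) - (((1 + ε : ℝ):ℂ) + t * I)) := by
    refine Integrable.bdd_mul (c := u ^ (-(1+ε))) ?_ (cnt _).aestronglyMeasurable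
      (ae_of_all _ fun t => (nrm _ t).le)
    simp only [e3]
    exact (k_int hk hε (by linarith)).comp_neg
  have h3 : ∫ t : ℝ, (u:ℂ) ^ (-(((1 + ε : ℝ):ℂ) + t * I)) *
      k (2 * ((1/2 + ε : ℝ) : ℂ) - (((1 + ε : ℝ):ℂ) + t * I)) = 0 := by
    simp only [e3]
    have e4 : ∀ t : ℝ, (u:ℂ) ^ (-(((1 + ε : ℝ):ℂ) + t * I)) * k ((ε:ℂ) + ((-t : ℝ):ℂ) * I) =
      (fun t : ℝ => (u:ℂ)^(-((1 + 2 * ε : ℝ):ℂ)) * (((u⁻¹:ℝ):ℂ) ^ (-((ε:ℂ) + t * I)) * k (ε + t * I))) (-t) := by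
      intro t
      beta_reduce
      rw [← mul_assoc]
      congr 1
      rw [ofReal_inv, inv_cpow _ _ (by rw [arg_ofReal_of_nonneg hu0.le]; exact Real.pi_pos.ne), ← cpow_neg, ← cpow_add _ _ huC]
      congr 1; push_cast; ring
    simp only [e4]
    rw [integral_neg_eq_self (fun t : ℝ => (u:ℂ)^(-((1 + 2 * ε : ℝ):ℂ)) * (((u⁻¹:ℝ):ℂ) ^ (-((ε:ℂ) + t * I)) * k (ε + t * I))),
      integral_const_mul, h2]
    simp
  simp only [mul_add]
  rw [integral_add i1 i2, h1, h3, add_zero]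
end

lemma contour_shift {a b : ℝ} (hab : a ≤ b) {G : ℂ → ℂ} {g : ℝ → ℝ}
    (hG : ∀ s : ℂ, a ≤ s.re → s.re ≤ b → DifferentiableAt ℂ G s)
    (hg : ∀ s : ℂ, a ≤ s.re → s.re ≤ b → ‖G s‖ ≤ g s.im) (hgi : Integrable g)
    (ht : Tendsto g atTop (𝓝 0)) (hb : Tendsto g atBot (𝓝 0)) :
    ∫ t : ℝ, G (b + t * I) = ∫ t : ℝ, G (a + t * I) := by
  have int : ∀ c : ℝ, a ≤ c → c ≤ b → Integrable fun t : ℝ => G (c + t * I) := by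
    intro c h1 h2
    refine Integrable.mono' hgi (Continuous.aestronglyMeasurable ?_) (ae_of_all _ fun t => ?_)
    · refine continuous_iff_continuousAt.2 fun t => ?_
      exact ContinuousAt.comp' (f := fun t : ℝ => (c:ℂ) + t * I) (hG _ (by simpa) (by simpa)).continuousAt (by fun_prop)
    · simpa using hg (c + t * I) (by simpa) (by simpa)
  have t1 : ∀ c : ℝ, a ≤ c → c ≤ b → Tendsto (fun T : ℝ => ∫ t in (-T)..T, G (c + t * I)) atTop (𝓝 (∫ t : ℝ, G (c + t * I))) := by
    intro c h1 h2
    exact intervalIntegral_tendsto_integral (int c h1 h2) tendsto_neg_atTop_atBot tendsto_id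
  have hor : ∀ T : ℝ, ‖∫ x in a..b, G (x + T * I)‖ ≤ g T * |b - a| := by
    intro T
    refine intervalIntegral.norm_integral_le_of_norm_le_const fun x hx => ?_
    rw [uIoc_of_le hab] at hx
    simpa using hg (x + T * I) (by simpa using hx.1.le) (by simpa using hx.2)
  have t2 : Tendsto (fun T : ℝ => ∫ x in a..b, G (x + T * I)) atTop (𝓝 0) := by
    refine squeeze_zero_norm hor ?_
    simpa using ht.mul_const |b - a|
  have t3 : Tendsto (fun T : ℝ => ∫ x in a..b, G (x + (-T : ℝ) * I)) atTop (𝓝 0) := by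
    refine squeeze_zero_norm (fun T => hor (-T)) ?_
    simpa using (hb.comp tendsto_neg_atTop_atBot).mul_const |b - a|
  have key : ∀ T : ℝ, I * (∫ t in (-T)..T, G (b + t * I)) - I * (∫ t in (-T)..T, G (a + t * I)) =
      (∫ x in a..b, G (x + T * I)) - ∫ x in a..b, G (x + (-T : ℝ) * I) := by
    intro T
    have := Complex.integral_boundary_rect_eq_zero_of_differentiableOn G ((a:ℂ) + (-T:ℝ) * I) ((b:ℂ) + T * I) (by
      intro s hs
      have h1 := hs.1
      simp only [line_re, mem_preimage] at h1
      rw [uIcc_of_le hab] at h1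
      exact (hG s h1.1 h1.2).differentiableWithinAt)
    simp only [line_re, line_im, smul_eq_mul] at this
    linear_combination this
  have l1 := ((t1 b hab le_rfl).const_mul I).sub ((t1 a le_rfl hab).const_mul I)
  simp only [key] at l1
  have l2 := tendsto_nhds_unique l1 (t2.sub t3)
  have l3 : I * ((∫ t : ℝ, G (b + t * I)) - ∫ t : ℝ, G (a + t * I)) = 0 := by linear_combination l2
  rcases mul_eq_zero.1 l3 with h | h
  · exact absurd h I_ne_zero
  · exact sub_eq_zero.1 h

end

section
open Metric Complex MeasureTheory Set Filter Asymptotics Topology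

noncomputable def KK (k : ℂ → ℂ) (ε : ℝ) (s : ℂ) : ℂ := k s + k (2 * ((1/2 + ε : ℝ) : ℂ) - s)

section
variable {w : ℝ → ℝ} {k : ℂ → ℂ} (hk : KernelPair w k) {ε : ℝ} (hε : 0 < ε) (hε1 : ε ≤ 1)
include hk hε hε1

lemma KK_diff {s : ℂ} (h1 : 1/2 + ε ≤ s.re) (h2 : s.re ≤ 1 + ε) : DifferentiableAt ℂ (KK k ε) s := by
  refine (hk.diff s (by linarith)).add ?_
  refine DifferentiableAt.comp (f := fun s => 2 * ((1/2 + ε : ℝ) : ℂ) - s) s (hk.diff _ ?_) (by fun_prop)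
  simp; linarith

lemma KK_decay : ∃ M : ℝ, 0 ≤ M ∧ ∀ s : ℂ, 1/2 + ε ≤ s.re → s.re ≤ 1 + ε →
    ‖KK k ε s‖ ≤ M * (1 + s.im^2)⁻¹ := by
  obtain ⟨M, hM0, hM⟩ := hk.decay ε hε
  refine ⟨2 * M, by linarith, fun s h1 h2 => ?_⟩
  have a1 := hM s (by linarith) (by linarith)
  have a2 := hM (2 * ((1/2 + ε : ℝ) : ℂ) - s) (by simp; linarith) (by simp; linarith)
  have e : (2 * ((1/2 + ε : ℝ) : ℂ) - s).im = - s.im := by simp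
  rw [e, neg_sq] at a2
  refine (norm_add_le _ _).trans ?_
  linarith

lemma KK_int {c : ℝ} (h1 : 1/2 + ε ≤ c) (h2 : c ≤ 1 + ε) : Continuous (fun t : ℝ => KK k ε (c + t * I)) ∧
    Integrable fun t : ℝ => KK k ε (c + t * I) := by
  have hc : Continuous (fun t : ℝ => KK k ε (c + t * I)) := by
    refine continuous_iff_continuousAt.2 fun t => ?_
    exact ContinuousAt.comp' (f := fun t : ℝ => (c:ℂ) + t * I) (KK_diff hk hε hε1 (by simpa using h1) (by simpa using h2)).continuousAt (by fun_prop)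
  obtain ⟨M, hM0, hM⟩ := KK_decay hk hε hε1
  refine ⟨hc, Integrable.mono' (integrable_inv_one_add_sq.const_mul M) hc.aestronglyMeasurable (ae_of_all _ fun t => ?_)⟩
  simpa using hM (c + t * I) (by simpa using h1) (by simpa using h2)

lemma sum_part {d : ℕ} (χ : DirichletCharacter ℂ d) (hr : ∀ a, (χ a).im = 0) :
    HasSum (fun n : ℕ => 2 * Real.pi * ((aa χ n * w n : ℝ) : ℂ))
      (∫ t : ℝ, LSeries (fun n => ((aa χ n : ℝ) : ℂ)) (((1 + ε : ℝ):ℂ) + t * I) * KK k ε (((1 + ε : ℝ):ℂ) + t * I)) := by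
  set a : ℕ → ℂ := fun n => ((aa χ n : ℝ) : ℂ) with ha
  obtain ⟨hc, hi⟩ := KK_int hk hε hε1 (c := 1 + ε) (by linarith) le_rfl
  have hnorm : ∀ (n : ℕ) (t : ℝ), ‖LSeries.term a (((1 + ε : ℝ):ℂ) + t * I) n‖ = ‖LSeries.term a ((1 + ε : ℝ):ℂ) n‖ := by
    intro n t
    rw [LSeries.norm_term_eq, LSeries.norm_term_eq]; simp
  have hct : ∀ n : ℕ, Continuous fun t : ℝ => LSeries.term a (((1 + ε : ℝ):ℂ) + t * I) n := by
    intro n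
    rcases Nat.eq_zero_or_pos n with rfl | hn
    · simp only [LSeries.term_zero]; exact continuous_const
    · have hn' : (n:ℂ) ≠ 0 := by exact_mod_cast hn.ne'
      simp only [LSeries.term_of_ne_zero hn.ne']
      refine continuous_const.div (Continuous.const_cpow (by fun_prop) (Or.inl hn')) fun t => ?_
      simp [cpow_eq_zero_iff, hn']
  have h := hasSum_integral_of_summable_integral_norm (μ := volume)
    (F := fun (n : ℕ) (t : ℝ) => LSeries.term a (((1 + ε : ℝ):ℂ) + t * I) n * KK k ε (((1 + ε : ℝ):ℂ) + t * I)) (by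
      intro n
      exact hi.bdd_mul (c := ‖LSeries.term a ((1 + ε : ℝ):ℂ) n‖) (hct n).aestronglyMeasurable (ae_of_all _ fun t => (hnorm n t).le)) (by
      simp only [norm_mul, hnorm, integral_const_mul]
      refine Summable.mul_right _ ?_
      exact (aa_summable χ hr (s := ((1 + ε : ℝ):ℂ)) (by simp; linarith)).norm)
  have e1 : ∀ n : ℕ, ∫ t : ℝ, LSeries.term a (((1 + ε : ℝ):ℂ) + t * I) n * KK k ε (((1 + ε : ℝ):ℂ) + t * I) =
      2 * Real.pi * ((aa χ n * w n : ℝ) : ℂ) := by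
    intro n
    rcases Nat.eq_zero_or_pos n with rfl | hn
    · simp [aa]
    · have h1 : (1:ℝ) ≤ n := by exact_mod_cast hn
      have := KK_inv hk hε hε1 h1
      have e2 : ∀ t : ℝ, LSeries.term a (((1 + ε : ℝ):ℂ) + t * I) n * KK k ε (((1 + ε : ℝ):ℂ) + t * I) =
        a n * (((n:ℝ):ℂ) ^ (-(((1 + ε : ℝ):ℂ) + t * I)) * KK k ε (((1 + ε : ℝ):ℂ) + t * I)) := by
        intro t
        rw [LSeries.term_of_ne_zero hn.ne', cpow_neg, div_eq_mul_inv, ofReal_natCast]; ring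
      simp only [e2, integral_const_mul]
      unfold KK
      rw [this]; simp only [ha]; push_cast; ring
  simp only [e1] at h
  have e5 : ∀ t : ℝ, LSeries a (((1 + ε : ℝ):ℂ) + t * I) * KK k ε (((1 + ε : ℝ):ℂ) + t * I) =
      ∑' n, LSeries.term a (((1 + ε : ℝ):ℂ) + t * I) n * KK k ε (((1 + ε : ℝ):ℂ) + t * I) := by
    intro t; rw [LSeries, tsum_mul_right]
  simp only [e5]
  exact h

lemma int_part : ∫ t : ℝ, 1 / ((((1 + ε : ℝ):ℂ) + t * I) - 1) * KK k ε (((1 + ε : ℝ):ℂ) + t * I) =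
      2 * Real.pi * ((∫ u in Ioi (1:ℝ), w u : ℝ) : ℂ) := by
  obtain ⟨hc, hi⟩ := KK_int hk hε hε1 (c := 1 + ε) (by linarith) le_rfl
  have e1 : ∀ t : ℝ, 1 / ((((1 + ε : ℝ):ℂ) + t * I) - 1) * KK k ε (((1 + ε : ℝ):ℂ) + t * I) =
      ∫ u in Ioi (1:ℝ), (u:ℂ) ^ (-(((1 + ε : ℝ):ℂ) + t * I)) * KK k ε (((1 + ε : ℝ):ℂ) + t * I) := by
    intro t
    rw [integral_mul_const, integral_Ioi_cpow_of_lt (by simp; linarith) zero_lt_one]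
    congr 1
    rw [ofReal_one, one_cpow, neg_div, ← div_neg]; congr 1; ring
  simp only [e1]
  rw [integral_integral_swap]
  · rw [← integral_complex_ofReal, ← integral_const_mul]
    refine setIntegral_congr_fun measurableSet_Ioi fun u hu => ?_
    have := KK_inv hk hε hε1 (le_of_lt (mem_Ioi.1 hu))
    unfold KK
    simpa using this
  · have h1 : Integrable (fun u : ℝ => u ^ (-(1+ε))) (volume.restrict (Ioi 1)) :=
      integrableOn_Ioi_rpow_of_lt (by linarith) zero_lt_one
    have h2 := hi.norm.mul_prod h1
    refine Integrable.mono' h2 ?_ ?_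
    · refine Measurable.aestronglyMeasurable ?_
      have m1 : Measurable fun p : ℝ × ℝ => (p.2 : ℂ) ^ (-(((1 + ε : ℝ):ℂ) + p.1 * I)) :=
        (measurable_ofReal.comp measurable_snd).pow (by fun_prop)
      exact m1.mul (hc.measurable.comp measurable_fst)
    · have : ∀ᵐ p : ℝ × ℝ ∂(volume.prod (volume.restrict (Ioi 1))), p.2 ∈ Ioi (1:ℝ) := by
        have : ∀ᵐ u ∂(volume.restrict (Ioi (1:ℝ))), u ∈ Ioi (1:ℝ) := ae_restrict_mem measurableSet_Ioi
        exact Measure.quasiMeasurePreserving_snd.ae this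
      filter_upwards [this] with p hp
      have hp0 : 0 < p.2 := zero_lt_one.trans hp
      simp only [Function.uncurry]
      rw [norm_mul, Complex.norm_cpow_eq_rpow_re_of_pos hp0, mul_comm]
      simp
end

lemma lg_growth {d : ℕ} [NeZero d] (t : ℝ) : lg d t ≤ (4 * d) * (1 + t^2) ^ ((1:ℝ)/4) := by
  have hd : (1:ℝ) ≤ d := by exact_mod_cast Nat.pos_of_ne_zero (NeZero.ne d)
  have h0 := abs_nonneg t
  have h1 : lg d t ≤ (d * (|t|+2))^((1:ℝ)/2) / (1/2) := Real.log_le_rpow_div (by positivity) (by norm_num)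
  have h2 : |t| + 2 ≤ 3 * (1+t^2)^((1:ℝ)/2) := by
    rw [← Real.sqrt_eq_rpow]
    have a1 : |t| ≤ √(1+t^2) := Real.abs_le_sqrt (by linarith)
    have a2 : 1 ≤ √(1+t^2) := Real.one_le_sqrt.2 (by nlinarith)
    linarith
  have h3 : (d * (|t|+2))^((1:ℝ)/2) ≤ ((2*d)^2 * (1+t^2)^((1:ℝ)/2)) ^((1:ℝ)/2) := by
    have : (0:ℝ) ≤ (1+t^2)^((1:ℝ)/2) := by positivity
    refine Real.rpow_le_rpow (by positivity) ?_ (by norm_num)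
    calc d * (|t|+2) ≤ d * (3 * (1+t^2)^((1:ℝ)/2)) := by gcongr
      _ ≤ _ := by nlinarith [mul_nonneg (by nlinarith : (0:ℝ) ≤ d * d - d) this]
  have h4 : ((2*d)^2 * (1+t^2)^((1:ℝ)/2)) ^((1:ℝ)/2) = (2*d) * (1+t^2)^((1:ℝ)/4) := by
    rw [Real.mul_rpow (by positivity) (by positivity), ← Real.sqrt_eq_rpow, Real.sqrt_sq (by positivity),
      ← Real.rpow_mul (by positivity)]
    norm_num
  rw [h4] at h3
  linarith

lemma explicit {w : ℝ → ℝ} {k : ℂ → ℂ} (hk : KernelPair w k) {ε : ℝ} (hε : 0 < ε) (hε1 : ε ≤ 1)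
    {d : ℕ} [NeZero d] (χ : DirichletCharacter ℂ d) (hχ : χ ≠ 1) (hr : ∀ a, (χ a).im = 0)
    (hz : ∀ s : ℂ, 0 < s.re → ff χ s = 0 → s.re = 1/2) :
    Summable (fun n : ℕ => aa χ n * w n) ∧
    |∑' n : ℕ, aa χ n * w n - ∫ u in Ioi (1:ℝ), w u| ≤
      ∫ t : ℝ, |(logDeriv (ff χ) (((1/2 + ε : ℝ) : ℂ) + t * I)).re| * ‖k (((1/2 + ε : ℝ) : ℂ) + t * I)‖ := by
  have hs := sum_part hk hε hε1 χ hr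
  have hi := int_part hk hε hε1
  obtain ⟨M, hM0, hM⟩ := KK_decay hk hε hε1
  have hpi : (2 * Real.pi : ℂ) ≠ 0 := by simp [Real.pi_ne_zero]
  have hsumm : Summable (fun n : ℕ => aa χ n * w n) := by
    have := (summable_mul_left_iff hpi).1 hs.summable
    exact_mod_cast this
  refine ⟨hsumm, ?_⟩
  -- the function
  set G : ℂ → ℂ := fun s => -logDeriv (ff χ) s * KK k ε s with hG
  have hfne : ∀ s : ℂ, 1/2 < s.re → ff χ s ≠ 0 := by
    intro s h1 h
    have := hz s (by linarith) h
    linarith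
  have hLd : ∀ s : ℂ, 1/2 < s.re → DifferentiableAt ℂ (logDeriv (ff χ)) s := by
    intro s h1
    refine DifferentiableAt.div ?_ (ff_diff χ hχ s) (hfne s h1)
    exact ((ff_diff χ hχ).deriv) s
  set D : ℝ := 25500 * (4 * d) * (1 + 1/ε) * M with hD
  set g : ℝ → ℝ := fun t => D * (1 + t^2) ^ (-(3:ℝ)/4) with hg
  have hgb : ∀ s : ℂ, 1/2 + ε ≤ s.re → s.re ≤ 1 + ε → ‖G s‖ ≤ g s.im := by
    intro s h1 h2
    have b1 := logDeriv_pointwise χ hχ hz (s := s) (by linarith) (by linarith)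
    have b2 := hM s h1 h2
    have b3 := lg_growth (d := d) s.im
    have b0 := lg_pos (d := d) s.im
    have b4 : ‖logDeriv (ff χ) s‖ ≤ 25500 * ((4 * d) * (1 + s.im^2) ^ ((1:ℝ)/4)) * (1 + 1/ε) := by
      refine b1.trans ?_
      have : ε ≤ s.re - 1/2 := by linarith
      have : 0 ≤ 1 + 1/(s.re - 1/2) := by
        have : 0 < s.re - 1/2 := by linarith
        positivity
      gcongr
    simp only [hG, norm_mul, norm_neg]
    calc _ ≤ (25500 * ((4 * d) * (1 + s.im^2) ^ ((1:ℝ)/4)) * (1 + 1/ε)) * (M * (1 + s.im^2)⁻¹) := by gcongr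
      _ = D * ((1 + s.im^2) ^ ((1:ℝ)/4) * (1 + s.im^2)⁻¹) := by rw [hD]; ring
      _ = g s.im := by
        rw [hg, ← Real.rpow_neg_one, ← Real.rpow_add (by positivity)]; norm_num
  have hgi : Integrable g := by
    refine Integrable.const_mul ?_ D
    have := integrable_rpow_neg_one_add_norm_sq (E := ℝ) (μ := volume) (r := 3/2) (by norm_num)
    refine this.congr (ae_of_all _ fun t => ?_)
    simp only [Real.norm_eq_abs, sq_abs]; norm_num
  have htop : Tendsto g atTop (𝓝 0) := by
    have a1 : Tendsto (fun t : ℝ => 1 + t^2) atTop atTop :=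
      tendsto_atTop_add_const_left _ _ (tendsto_pow_atTop two_ne_zero)
    have a2 := (tendsto_rpow_neg_atTop (y := 3/4) (by norm_num)).comp a1
    have a3 := a2.const_mul D
    rw [mul_zero] at a3
    refine a3.congr fun t => ?_
    simp only [hg, Function.comp]; norm_num
  have hbot : Tendsto g atBot (𝓝 0) := by
    have := htop.comp tendsto_neg_atBot_atTop
    refine this.congr fun t => ?_
    simp [hg]
  have shift := contour_shift (a := 1/2 + ε) (b := 1 + ε) (by linarith) (G := G) (g := g) (by
    intro s h1 h2
    exact (hLd s (by linarith)).neg.mul (KK_diff hk hε hε1 h1 h2)) hgb hgi htop hbot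
  -- right side
  have hline : ∀ c : ℝ, 1/2 + ε ≤ c → c ≤ 1 + ε → Integrable fun t : ℝ => G (c + t * I) := by
    intro c h1 h2
    refine Integrable.mono' hgi (Continuous.aestronglyMeasurable ?_) (ae_of_all _ fun t => ?_)
    · refine continuous_iff_continuousAt.2 fun t => ?_
      exact ContinuousAt.comp' (f := fun t : ℝ => (c:ℂ) + t * I) ((hLd _ (by simp; linarith)).neg.mul
        (KK_diff hk hε hε1 (by simpa using h1) (by simpa using h2))).continuousAt (by fun_prop)
    · simpa using hgb (c + t * I) (by simpa using h1) (by simpa using h2)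
  have hKi := KK_int hk hε hε1 (c := 1 + ε) (by linarith) le_rfl
  have hrhs : ∫ t : ℝ, G (((1 + ε : ℝ) : ℂ) + t * I) =
      2 * Real.pi * ((∑' n : ℕ, aa χ n * w n - ∫ u in Ioi (1:ℝ), w u : ℝ) : ℂ) := by
    have e1 : ∀ t : ℝ, 1 / ((((1 + ε : ℝ):ℂ) + t * I) - 1) * KK k ε (((1 + ε : ℝ):ℂ) + t * I) =
      LSeries (fun n => ((aa χ n : ℝ) : ℂ)) (((1 + ε : ℝ):ℂ) + t * I) * KK k ε (((1 + ε : ℝ):ℂ) + t * I)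
        - G (((1 + ε : ℝ) : ℂ) + t * I) := by
      intro t
      simp only [hG]
      rw [ff_series χ hχ hr (by simp; linarith)]; ring
    have i2 : Integrable fun t : ℝ => 1 / ((((1 + ε : ℝ):ℂ) + t * I) - 1) * KK k ε (((1 + ε : ℝ):ℂ) + t * I) := by
      have hne : ∀ t : ℝ, ((1 + ε : ℝ):ℂ) + t * I - 1 ≠ 0 := by
        intro t h
        have := congrArg Complex.re h; simp at this; linarith
      refine hKi.2.bdd_mul (c := 1/ε) (Continuous.aestronglyMeasurable ?_) (ae_of_all _ fun t => ?_)
      · exact continuous_const.div (by fun_prop) hne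
      · rw [norm_div, norm_one]
        have : ε ≤ ‖((1 + ε : ℝ):ℂ) + t * I - 1‖ := by
          have := Complex.re_le_norm (((1 + ε : ℝ):ℂ) + t * I - 1)
          simpa using this
        gcongr
    have i3 : Integrable fun t : ℝ => LSeries (fun n => ((aa χ n : ℝ) : ℂ)) (((1 + ε : ℝ):ℂ) + t * I) * KK k ε (((1 + ε : ℝ):ℂ) + t * I) := by
      refine (i2.add (hline (1+ε) (by linarith) le_rfl)).congr (ae_of_all _ fun t => ?_)
      simp only [Pi.add_apply, e1]; ring
    have e2 : ∫ t : ℝ, LSeries (fun n => ((aa χ n : ℝ) : ℂ)) (((1 + ε : ℝ):ℂ) + t * I) * KK k ε (((1 + ε : ℝ):ℂ) + t * I)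
        = 2 * Real.pi * ((∑' n : ℕ, aa χ n * w n : ℝ) : ℂ) := by
      rw [← hs.tsum_eq, tsum_mul_left, ← ofReal_tsum]
    have e3 := hi
    simp only [e1] at e3
    rw [integral_sub i3 (hline (1+ε) (by linarith) le_rfl), e2] at e3
    rw [ofReal_sub]
    linear_combination -e3
  have hlhs : ∀ t : ℝ, (G (((1/2 + ε : ℝ) : ℂ) + t * I)).re =
      -(logDeriv (ff χ) (((1/2 + ε : ℝ) : ℂ) + t * I)).re * (2 * (k (((1/2 + ε : ℝ) : ℂ) + t * I)).re) := by
    intro t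
    have e1 : 2 * ((1/2 + ε : ℝ) : ℂ) - (((1/2 + ε : ℝ) : ℂ) + t * I) = (starRingEnd ℂ) (((1/2 + ε : ℝ) : ℂ) + t * I) := by
      rw [map_add, map_mul, conj_ofReal, conj_ofReal, conj_I]; ring
    simp only [hG, KK]
    rw [e1, hk.conj, add_conj, mul_re]
    simp
  rw [hrhs] at shift
  have sr := congrArg Complex.re shift
  have ir := hline (1/2 + ε) le_rfl (by linarith)
  have sr2 : 2 * Real.pi * (∑' n : ℕ, aa χ n * w n - ∫ u in Ioi (1:ℝ), w u) =
      ∫ t : ℝ, (G (((1/2 + ε : ℝ) : ℂ) + t * I)).re := by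
    have h1 := integral_re ir
    simp only [RCLike.re_eq_complex_re] at h1
    rw [h1, ← sr]
    rw [show (2 * Real.pi : ℂ) = ((2 * Real.pi : ℝ) : ℂ) by push_cast; ring, ← ofReal_mul, ofReal_re]
  have sr3 : |2 * Real.pi * (∑' n : ℕ, aa χ n * w n - ∫ u in Ioi (1:ℝ), w u)| ≤
      2 * ∫ t : ℝ, |(logDeriv (ff χ) (((1/2 + ε : ℝ) : ℂ) + t * I)).re| * ‖k (((1/2 + ε : ℝ) : ℂ) + t * I)‖ := by
    rw [sr2, ← integral_const_mul, ← Real.norm_eq_abs]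
    refine norm_integral_le_of_norm_le ?_ (ae_of_all _ fun t => ?_)
    · refine Integrable.const_mul ?_ 2
      have b1 : ∀ t : ℝ, ‖logDeriv (ff χ) (((1/2 + ε : ℝ) : ℂ) + t * I)‖ ≤ 25500 * (4 * d) * (1 + 1/ε) * (1 + t^2) ^ ((1:ℝ)/4) := by
        intro t
        have b1 := logDeriv_pointwise χ hχ hz (s := ((1/2 + ε : ℝ) : ℂ) + t * I) (by simp; linarith) (by simp; linarith)
        rw [line_re, line_im] at b1
        have b3 := lg_growth (d := d) t
        refine b1.trans ?_
        rw [show 1/2 + ε - 1/2 = ε by ring]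
        calc _ ≤ 25500 * ((4 * d) * (1 + t^2) ^ ((1:ℝ)/4)) * (1 + 1/ε) := by gcongr
          _ = _ := by ring
      obtain ⟨M', hM0', hM'⟩ := hk.decay (1/2 + ε) (by linarith)
      refine Integrable.mono' (g := fun t => 25500 * (4 * d) * (1 + 1/ε) * M' * (1 + t^2) ^ (-(3:ℝ)/4)) ?_ ?_ (ae_of_all _ fun t => ?_)
      · refine Integrable.const_mul ?_ _
        have := integrable_rpow_neg_one_add_norm_sq (E := ℝ) (μ := volume) (r := 3/2) (by norm_num)
        refine this.congr (ae_of_all _ fun t => ?_)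
        simp only [Real.norm_eq_abs, sq_abs]; norm_num
      · refine Continuous.aestronglyMeasurable ?_
        refine Continuous.mul (continuous_re.comp ?_).abs (k_cont hk (by linarith)).norm
        refine continuous_iff_continuousAt.2 fun t => ?_
        exact ContinuousAt.comp' (f := fun t : ℝ => ((1/2 + ε : ℝ):ℂ) + t * I) (hLd _ (by simp; linarith)).continuousAt (by fun_prop)
      · rw [norm_mul, Real.norm_eq_abs, abs_abs, norm_norm]
        have b2 := hM' (((1/2 + ε : ℝ) : ℂ) + t * I) (by simp) (by simp; linarith)
        rw [line_im] at b2
        have b4 := (Complex.abs_re_le_norm _).trans (b1 t)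
        calc _ ≤ (25500 * (4 * d) * (1 + 1/ε) * (1 + t^2) ^ ((1:ℝ)/4)) * (M' * (1+t^2)⁻¹) := by gcongr
          _ = 25500 * (4 * d) * (1 + 1/ε) * M' * ((1 + t^2) ^ ((1:ℝ)/4) * (1 + t^2)⁻¹) := by ring
          _ = _ := by
            rw [← Real.rpow_neg_one, ← Real.rpow_add (by positivity)]; norm_num
    · rw [hlhs, norm_mul, norm_neg, norm_mul, Real.norm_eq_abs, Real.norm_eq_abs, Real.norm_eq_abs, abs_two]
      have := Complex.abs_re_le_norm (k (((1/2 + ε : ℝ) : ℂ) + t * I))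
      calc _ = 2 * (|(logDeriv (ff χ) (((1/2 + ε : ℝ) : ℂ) + t * I)).re| * |(k (((1/2 + ε : ℝ) : ℂ) + t * I)).re|) := by ring
        _ ≤ _ := by gcongr
  rw [abs_mul, abs_of_pos (by positivity)] at sr3
  have := Real.pi_gt_three
  nlinarith [abs_nonneg (∑' n : ℕ, aa χ n * w n - ∫ u in Ioi (1:ℝ), w u)]

end

section
open Metric Complex MeasureTheory Set Filter Asymptotics Topology

noncomputable def pp (a u : ℝ) : ℝ := max 0 (a - u)

lemma HasMellin.sub' {f g : ℝ → ℂ} {s a b : ℂ} (h1 : HasMellin f s a) (h2 : HasMellin g s b) :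
    HasMellin (fun t => f t - g t) s (a - b) := by
  have := hasMellin_sub h1.1 h2.1
  rwa [h1.2, h2.2] at this

lemma HasMellin.cmul' {f : ℝ → ℂ} {s a : ℂ} (h1 : HasMellin f s a) (c : ℂ) :
    HasMellin (fun t => c * f t) s (c * a) := by
  refine ⟨h1.1.const_smul c, ?_⟩
  have := mellin_const_smul f s c
  simp only [smul_eq_mul] at this
  rw [this, h1.2]

lemma HasMellin.congr' {f g : ℝ → ℂ} {s a : ℂ} (h1 : HasMellin f s a) (h : ∀ t > 0, f t = g t) :
    HasMellin g s a := by
  refine ⟨?_, ?_⟩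
  · refine IntegrableOn.congr_fun h1.1 (fun t ht => ?_) measurableSet_Ioi
    beta_reduce
    rw [h t ht]
  · rw [← h1.2, mellin, mellin]
    refine setIntegral_congr_fun measurableSet_Ioi (fun t ht => ?_)
    beta_reduce
    rw [h t ht]

lemma pp_mellin {a : ℝ} (ha : 0 < a) {s : ℂ} (hs : 0 < s.re) :
    HasMellin (fun u => ((pp a u : ℝ) : ℂ)) s ((a:ℂ)^(s+1) / (s * (s+1))) := by
  have h1 := HasMellin.sub' (hasMellin_one_Ioc hs) (hasMellin_cpow_Ioc 1 (s := s) (by simp; linarith))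
  have h2 : HasMellin (fun t => (fun t => (Ioc (0:ℝ) 1).indicator (fun _ => (1:ℂ)) t - (Ioc (0:ℝ) 1).indicator (fun t => (t:ℂ)^(1:ℂ)) t) (a⁻¹ * t)) s
      (((a⁻¹:ℝ):ℂ)^(-s) * (1/s - 1/(s+1))) := by
    refine ⟨(MellinConvergent.comp_mul_left (inv_pos.2 ha)).2 h1.1, ?_⟩
    refine (mellin_comp_mul_left (fun t => (Ioc (0:ℝ) 1).indicator (fun _ => (1:ℂ)) t - (Ioc (0:ℝ) 1).indicator (fun t => (t:ℂ)^(1:ℂ)) t) s (inv_pos.2 ha)).trans ?_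
    rw [h1.2, smul_eq_mul]
  have h3 := h2.cmul' (a:ℂ)
  have haC : (a:ℂ) ≠ 0 := by exact_mod_cast ha.ne'
  have hs0 : s ≠ 0 := by rintro rfl; simp at hs
  have hs1 : s + 1 ≠ 0 := by intro h; have := congrArg Complex.re h; simp at this; linarith
  have e : (a:ℂ) * (((a⁻¹:ℝ):ℂ)^(-s) * (1/s - 1/(s+1))) = (a:ℂ)^(s+1) / (s * (s+1)) := by
    rw [ofReal_inv, inv_cpow _ _ (by rw [arg_ofReal_of_nonneg ha.le]; exact Real.pi_pos.ne), ← cpow_neg, neg_neg,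
      cpow_add _ _ haC, cpow_one]
    field_simp; ring
  rw [e] at h3
  refine h3.congr' fun t ht => ?_
  beta_reduce
  have ht0 : 0 < a⁻¹ * t := by positivity
  by_cases h : a⁻¹ * t ≤ 1
  · have hta : t ≤ a := by
      have := mul_le_mul_of_nonneg_left h ha.le
      rwa [mul_inv_cancel_left₀ ha.ne', mul_one] at this
    rw [indicator_of_mem (by exact ⟨ht0, h⟩), indicator_of_mem (by exact ⟨ht0, h⟩), pp, max_eq_right (by linarith), cpow_one]
    push_cast
    field_simp
  · have hta : a ≤ t := by
      have := mul_le_mul_of_nonneg_left (not_le.1 h).le ha.le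
      rwa [mul_inv_cancel_left₀ ha.ne', mul_one] at this
    rw [indicator_of_notMem (fun hh => h hh.2), indicator_of_notMem (fun hh => h hh.2), pp, max_eq_left (by linarith)]
    simp

noncomputable def ww (x u : ℝ) : ℝ := (pp (x + √x) u - pp x u) / √x - (pp 2 u - pp 1 u)

noncomputable def kk (x : ℝ) (s : ℂ) : ℂ :=
  ((√x : ℝ) : ℂ)⁻¹ * (((x + √x : ℝ):ℂ)^(s+1) / (s * (s+1)) - (x:ℂ)^(s+1) / (s * (s+1)))
    - (((2:ℝ):ℂ)^(s+1) / (s * (s+1)) - ((1:ℝ):ℂ)^(s+1) / (s * (s+1)))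

section
variable {x : ℝ} (hx : 2 ≤ x)
include hx

lemma ww_zero {u : ℝ} (hu : u ≤ 1) : ww x u = 0 := by
  have h : 0 < √x := Real.sqrt_pos.2 (by linarith)
  rw [ww, pp, pp, pp, pp, max_eq_right (by linarith), max_eq_right (by linarith), max_eq_right (by linarith), max_eq_right (by linarith)]
  field_simp; ring

lemma ww_one {u : ℝ} (hu : 2 ≤ u) (hu2 : u ≤ x) : ww x u = 1 := by
  have h : 0 < √x := Real.sqrt_pos.2 (by linarith)
  rw [ww, pp, pp, pp, pp, max_eq_right (by linarith), max_eq_right (by linarith), max_eq_left (by linarith), max_eq_left (by linarith)]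
  field_simp; ring

lemma ww_big {u : ℝ} (hu2 : x + √x ≤ u) : ww x u = 0 := by
  have h : 0 < √x := Real.sqrt_pos.2 (by linarith)
  rw [ww, pp, pp, pp, pp, max_eq_left (by linarith), max_eq_left (by linarith), max_eq_left (by linarith), max_eq_left (by linarith)]
  simp

lemma ww_mem (u : ℝ) : 0 ≤ ww x u ∧ ww x u ≤ 1 := by
  have h : 0 < √x := Real.sqrt_pos.2 (by linarith)
  rcases le_total u 1 with h1 | h1
  · rw [ww_zero hx h1]; norm_num
  rcases le_total u 2 with h2 | h2
  · have : ww x u = u - 1 := by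
      rw [ww, pp, pp, pp, pp, max_eq_right (by linarith), max_eq_right (by linarith), max_eq_right (by linarith), max_eq_left (by linarith)]
      field_simp; ring
    rw [this]; constructor <;> linarith
  rcases le_total u x with h3 | h3
  · rw [ww_one hx h2 h3]; norm_num
  rcases le_total u (x + √x) with h4 | h4
  · have : ww x u = (x + √x - u) / √x := by
      rw [ww, pp, pp, pp, pp, max_eq_right (by linarith), max_eq_left (by linarith), max_eq_left (by linarith), max_eq_left (by linarith)]
      simp
    rw [this]
    refine ⟨div_nonneg (by linarith) h.le, (div_le_one h).2 (by linarith)⟩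
  · rw [ww_big hx h4]; norm_num

omit hx in
lemma ww_cont : Continuous (ww x) := by
  unfold ww pp; fun_prop

lemma ww_int : x - 2 ≤ ∫ u in Ioi (1:ℝ), ww x u ∧ ∫ u in Ioi (1:ℝ), ww x u ≤ x + √x - 1 := by
  have h : 0 < √x := Real.sqrt_pos.2 (by linarith)
  have e : ∫ u in Ioi (1:ℝ), ww x u = ∫ u in Ioc (1:ℝ) (x + √x), ww x u := by
    refine setIntegral_eq_of_subset_of_forall_sdiff_eq_zero measurableSet_Ioi Ioc_subset_Ioi_self ?_
    intro u hu
    exact ww_big hx (by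
      by_contra hc
      exact hu.2 ⟨hu.1, (not_le.1 hc).le⟩)
  have i : IntegrableOn (ww x) (Ioc (1:ℝ) (x + √x)) := ww_cont.integrableOn_Ioc
  rw [e]
  constructor
  · have h1 : ∫ u in Ioc (2:ℝ) x, ww x u ≤ ∫ u in Ioc (1:ℝ) (x + √x), ww x u :=
      setIntegral_mono_set i (ae_of_all _ fun u => (ww_mem hx u).1)
        (LE.le.eventuallyLE (Ioc_subset_Ioc (by norm_num) (by linarith)))
    have h2 : ∫ u in Ioc (2:ℝ) x, ww x u = ∫ u in Ioc (2:ℝ) x, (1:ℝ) :=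
      setIntegral_congr_fun measurableSet_Ioc fun u hu => ww_one hx hu.1.le hu.2
    rw [h2] at h1
    simp only [integral_const, MeasurableSet.univ, measureReal_restrict_apply, univ_inter, smul_eq_mul, mul_one] at h1
    rw [Real.volume_real_Ioc_of_le hx] at h1
    exact h1
  · have h1 : ∫ u in Ioc (1:ℝ) (x + √x), ww x u ≤ ∫ u in Ioc (1:ℝ) (x + √x), (1:ℝ) :=
      setIntegral_mono_on i (by simp) measurableSet_Ioc fun u _ => (ww_mem hx u).2
    simp only [integral_const, MeasurableSet.univ, measureReal_restrict_apply, univ_inter, smul_eq_mul, mul_one] at h1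
    rw [Real.volume_real_Ioc_of_le (by linarith)] at h1
    exact h1

omit hx in
lemma cpow_conj_pos {a : ℝ} (ha : 0 < a) (s : ℂ) :
    (a:ℂ) ^ ((starRingEnd ℂ) s + 1) = (starRingEnd ℂ) ((a:ℂ) ^ (s+1)) := by
  have := Complex.cpow_conj (a:ℂ) (s+1) (by rw [arg_ofReal_of_nonneg ha.le]; exact Real.pi_pos.ne)
  rw [conj_ofReal] at this
  rw [← this]; simp

lemma kernel_pair : KernelPair (ww x) (kk x) := by
  have h : 0 < √x := Real.sqrt_pos.2 (by linarith)
  have hsx : √x ≤ x := by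
    rw [Real.sqrt_le_left (by linarith)]; nlinarith
  refine ⟨ww_cont, fun u hu => ww_zero hx hu, ?_, ?_, ?_, ?_⟩
  · intro s hs
    have h1 := ((pp_mellin (a := x + √x) (by linarith) hs).sub' (pp_mellin (a := x) (by linarith) hs)).cmul' (((√x : ℝ) : ℂ)⁻¹)
    have h2 := h1.sub' ((pp_mellin (a := 2) (by norm_num) hs).sub' (pp_mellin (a := 1) (by norm_num) hs))
    refine h2.congr' fun t _ => ?_
    rw [ww]; push_cast; ring
  · intro s hs
    have hs0 : s ≠ 0 := by rintro rfl; simp at hs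
    have hs1 : s + 1 ≠ 0 := by intro h; have := congrArg Complex.re h; simp at this; linarith
    have hd : ∀ a : ℝ, 0 < a → DifferentiableAt ℂ (fun s : ℂ => (a:ℂ)^(s+1) / (s * (s+1))) s := by
      intro a ha
      refine DifferentiableAt.div ?_ (by fun_prop) (mul_ne_zero hs0 hs1)
      exact DifferentiableAt.const_cpow (by fun_prop) (Or.inl (by exact_mod_cast ha.ne'))
    exact (((hd _ (by linarith)).sub (hd x (by linarith))).const_mul _).sub ((hd 2 (by norm_num)).sub (hd 1 (by norm_num)))
  · intro ε hε
    have hterm : ∀ a : ℝ, 1 ≤ a → ∀ s : ℂ, ε ≤ s.re → s.re ≤ 2 →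
        ‖(a:ℂ)^(s+1) / (s * (s+1))‖ ≤ a^3 * ((1 + 1/ε^2) * (1 + s.im^2)⁻¹) := by
      intro a ha s h1 h2
      rw [norm_div, norm_mul, Complex.norm_cpow_eq_rpow_re_of_pos (by linarith), div_eq_mul_inv]
      have e1 : a ^ (s+1).re ≤ a^3 := by
        rw [← Real.rpow_natCast a 3]
        exact Real.rpow_le_rpow_of_exponent_le ha (by simp; linarith)
      have e2 : ε^2 + s.im^2 ≤ ‖s‖ * ‖s+1‖ := by
        have a1 : ‖s‖ ≤ ‖s+1‖ := by
          rw [Complex.norm_def, Complex.norm_def]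
          apply Real.sqrt_le_sqrt
          rw [normSq_apply, normSq_apply]; simp; nlinarith
        have a2 : ‖s‖^2 = s.re^2 + s.im^2 := by rw [← normSq_eq_norm_sq, normSq_apply]; ring
        nlinarith [norm_nonneg s]
      have e3 : (‖s‖ * ‖s+1‖)⁻¹ ≤ (1 + 1/ε^2) * (1 + s.im^2)⁻¹ := by
        have : 0 < ε^2 + s.im^2 := by positivity
        refine (inv_anti₀ this e2).trans ?_
        rw [← div_eq_mul_inv, le_div_iff₀ (by positivity), inv_mul_le_iff₀ this]
        have : (ε^2 + s.im^2) * (1 + 1/ε^2) = 1 + s.im^2 + ε^2 + s.im^2 / ε^2 := by field_simp; ring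
        rw [this]
        have : 0 ≤ s.im^2/ε^2 := by positivity
        nlinarith
      gcongr
    refine ⟨((√x)⁻¹ * ((x+√x)^3 + x^3) + (2^3 + 1^3)) * (1 + 1/ε^2), by positivity, fun s h1 h2 => ?_⟩
    have t1 := hterm (x+√x) (by linarith) s h1 h2
    have t2 := hterm x (by linarith) s h1 h2
    have t3 := hterm 2 (by norm_num) s h1 h2
    have t4 := hterm 1 (by norm_num) s h1 h2
    have n1 : ‖((√x : ℝ) : ℂ)⁻¹‖ = (√x)⁻¹ := by rw [norm_inv, Complex.norm_real, Real.norm_of_nonneg h.le]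
    rw [kk]
    refine (norm_sub_le _ _).trans ?_
    rw [norm_mul, n1]
    have u1 := (norm_sub_le (((x + √x : ℝ):ℂ)^(s+1) / (s * (s+1))) ((x:ℂ)^(s+1) / (s * (s+1)))).trans (add_le_add t1 t2)
    have u2 := (norm_sub_le (((2:ℝ):ℂ)^(s+1) / (s * (s+1))) (((1:ℝ):ℂ)^(s+1) / (s * (s+1)))).trans (add_le_add t3 t4)
    have u3 := mul_le_mul_of_nonneg_left u1 (inv_nonneg.2 h.le)
    refine (add_le_add u3 u2).trans (le_of_eq ?_)
    ring
  · intro s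
    unfold kk
    rw [cpow_conj_pos (a := x + √x) (by linarith), cpow_conj_pos (a := x) (by linarith), cpow_conj_pos (a := 2) (by norm_num),
      cpow_conj_pos (a := 1) (by norm_num)]
    simp only [map_sub, map_mul, map_inv₀, conj_ofReal, map_div₀, map_add, map_one]

omit hx in
lemma cpow_diff_bound {a b : ℝ} (ha : 0 < a) (hab : a ≤ b) {s : ℂ} (hs : 0 < s.re) :
    ‖((b:ℂ)^(s+1) - (a:ℂ)^(s+1)) / (s+1)‖ ≤ b ^ s.re * (b - a) := by
  rw [← integral_cpow (Or.inl (by linarith))]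
  refine (intervalIntegral.norm_integral_le_of_norm_le_const (C := b ^ s.re) fun u hu => ?_).trans (le_of_eq ?_)
  · rw [uIoc_of_le hab] at hu
    have hu0 : 0 < u := ha.trans hu.1
    rw [Complex.norm_cpow_eq_rpow_re_of_pos hu0]
    exact Real.rpow_le_rpow hu0.le hu.2 hs.le
  · rw [abs_of_nonneg (by linarith)]

lemma kk_bound {t : ℝ} : ‖kk x (((1/2 + 1/(2 * Real.log x) : ℝ):ℂ) + t * I)‖ ≤
    147 * √x * (((1 + |t|) * (1 + |t|/√x))⁻¹) := by
  have h : 0 < √x := Real.sqrt_pos.2 (by linarith)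
  have h1x : 1 ≤ √x := Real.one_le_sqrt.2 (by linarith)
  have hsx : √x ≤ x := by
    rw [Real.sqrt_le_left (by linarith)]; nlinarith
  have hxx : √x * √x = x := Real.mul_self_sqrt (by linarith)
  have hlog : Real.log 2 ≤ Real.log x := Real.log_le_log (by norm_num) hx
  have hl2 := Real.log_two_gt_d9
  set ε : ℝ := 1/(2 * Real.log x) with hε
  have hlp : 0 < Real.log x := by linarith
  have hε0 : 0 < ε := by positivity
  have hε1 : ε ≤ 3/4 := by
    rw [hε, div_le_iff₀ (by positivity)]; linarith
  have hxε : x ^ ε ≤ 2 := by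
    have : x ^ ε = Real.exp (1/2) := by
      rw [Real.rpow_def_of_pos (by linarith), hε]; congr 1; field_simp
    rw [this]
    have h1 := Real.exp_one_lt_d9
    have h2 : Real.exp 1 = Real.exp (1/2) * Real.exp (1/2) := by rw [← Real.exp_add]; norm_num
    nlinarith [Real.exp_pos (1/2)]
  set s : ℂ := ((1/2 + ε : ℝ):ℂ) + t * I with hs
  have hre : s.re = 1/2 + ε := line_re _ _
  have him : s.im = t := line_im _ _
  have hs0 : s ≠ 0 := by intro h; rw [h] at hre; simp at hre; linarith
  have hs1 : s + 1 ≠ 0 := by intro h; have := congrArg Complex.re h; simp [hre] at this; linarith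
  -- power bounds
  have hX : x + √x ≤ 2 * x := by linarith
  have hxσ : x ^ (1/2 + ε) ≤ 2 * √x := by
    rw [Real.rpow_add (by linarith), ← Real.sqrt_eq_rpow]; nlinarith
  have h2σ : (2:ℝ) ^ (1/2 + ε) ≤ 3 := by
    calc (2:ℝ)^(1/2 + ε) ≤ 2 ^ ((3:ℝ)/2) := Real.rpow_le_rpow_of_exponent_le (by norm_num) (by linarith)
      _ = 2 * √2 := by
        rw [show (3:ℝ)/2 = 1 + 1/2 by norm_num, Real.rpow_add (by norm_num), Real.rpow_one, Real.sqrt_eq_rpow]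
      _ ≤ 3 := by
        have : √2 ≤ 1.5 := by rw [Real.sqrt_le_left (by norm_num)]; norm_num
        linarith
  have hXσ : (x + √x) ^ (1/2 + ε) ≤ 6 * √x := by
    calc (x + √x) ^ (1/2 + ε) ≤ (2 * x) ^ (1/2 + ε) := by gcongr
      _ = 2 ^ (1/2 + ε) * x ^ (1/2 + ε) := Real.mul_rpow (by norm_num) (by linarith)
      _ ≤ 3 * (2 * √x) := by gcongr
      _ = _ := by ring
  -- bound 2
  have eqk : kk x s = (((√x : ℝ) : ℂ)⁻¹ * ((((x + √x : ℝ):ℂ)^(s+1) - (x:ℂ)^(s+1)) / (s+1)) -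
      (((2:ℝ):ℂ)^(s+1) - ((1:ℝ):ℂ)^(s+1)) / (s+1)) / s := by
    rw [kk]; field_simp
  have n1 : ‖((√x : ℝ) : ℂ)⁻¹‖ = (√x)⁻¹ := by rw [norm_inv, Complex.norm_real, Real.norm_of_nonneg h.le]
  have B2 : ‖kk x s‖ ≤ 9 * √x / ‖s‖ := by
    rw [eqk, norm_div]
    gcongr
    refine (norm_sub_le _ _).trans ?_
    rw [norm_mul, n1]
    have c1 := cpow_diff_bound (a := x) (b := x + √x) (by linarith) (by linarith) (s := s) (by linarith)
    have c2 := cpow_diff_bound (a := 1) (b := 2) (by linarith) (by linarith) (s := s) (by linarith)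
    rw [hre] at c1 c2
    have c3 : (√x)⁻¹ * ‖(((x + √x : ℝ):ℂ)^(s+1) - (x:ℂ)^(s+1)) / (s+1)‖ ≤ 6 * √x := by
      rw [inv_mul_le_iff₀ h]
      refine c1.trans ?_
      rw [add_sub_cancel_left]
      nlinarith
    have c4 := c2.trans (by linarith : (2:ℝ) ^ (1/2+ε) * (2 - 1) ≤ 3)
    linarith
  have B1 : ‖kk x s‖ ≤ 20 * x / (‖s‖ * ‖s+1‖) := by
    have eqk2 : kk x s = (((√x : ℝ) : ℂ)⁻¹ * ((((x + √x : ℝ):ℂ)^(s+1) - (x:ℂ)^(s+1))) -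
      (((2:ℝ):ℂ)^(s+1) - ((1:ℝ):ℂ)^(s+1))) / (s * (s+1)) := by
      rw [kk]; field_simp
    rw [eqk2, norm_div, norm_mul s]
    gcongr
    have cp : ∀ a : ℝ, 0 < a → ‖(a:ℂ)^(s+1)‖ = a ^ (1/2+ε) * a := by
      intro a ha
      rw [Complex.norm_cpow_eq_rpow_re_of_pos ha, add_re, hre, one_re, Real.rpow_add ha, Real.rpow_one]
    have c1 : ‖((x + √x : ℝ):ℂ)^(s+1)‖ ≤ 6 * √x * (2 * x) := by
      rw [cp _ (by linarith)]; gcongr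
    have c2 : ‖(x:ℂ)^(s+1)‖ ≤ 2 * √x * x := by
      rw [cp _ (by linarith)]; gcongr
    have c3 : ‖((2:ℝ):ℂ)^(s+1)‖ ≤ 3 * 2 := by
      rw [cp _ (by linarith)]; gcongr
    have c4 : ‖((1:ℝ):ℂ)^(s+1)‖ ≤ 1 := by
      rw [cp _ (by linarith)]; simp
    refine (norm_sub_le _ _).trans ?_
    rw [norm_mul, n1]
    have c5 : (√x)⁻¹ * ‖((x + √x : ℝ):ℂ)^(s+1) - (x:ℂ)^(s+1)‖ ≤ 14 * x := by
      rw [inv_mul_le_iff₀ h]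
      refine (norm_sub_le _ _).trans ?_
      nlinarith
    have c6 := norm_sub_le (((2:ℝ):ℂ)^(s+1)) (((1:ℝ):ℂ)^(s+1))
    linarith
  have s1 : (1 + |t|)/3 ≤ ‖s‖ := by
    have a1 := Complex.re_le_norm s
    have a2 := Complex.abs_im_le_norm s
    rw [hre] at a1; rw [him] at a2; linarith
  have s2 : (1 + |t|)/2 ≤ ‖s+1‖ := by
    have a1 := Complex.re_le_norm (s+1)
    have a2 := Complex.abs_im_le_norm (s+1)
    rw [add_re, hre, one_re] at a1; rw [add_im, him, one_im, add_zero] at a2; linarith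
  have ht := abs_nonneg t
  have B2' : ‖kk x s‖ * (1 + |t|) ≤ 27 * √x := by
    have : ‖kk x s‖ ≤ 9 * √x / ((1+|t|)/3) := B2.trans (by gcongr)
    rw [le_div_iff₀ (by positivity)] at this
    linarith
  have B1' : ‖kk x s‖ * (1 + |t|) * (1 + |t|) ≤ 120 * x := by
    have : ‖kk x s‖ ≤ 20 * x / ((1+|t|)/3 * ((1+|t|)/2)) := B1.trans (by gcongr)
    rw [le_div_iff₀ (by positivity)] at this
    linarith
  rw [← div_eq_mul_inv, le_div_iff₀ (by positivity)]
  have B3 : ‖kk x s‖ * (1 + |t|) * (|t|/√x) ≤ 120 * √x := by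
    rw [← mul_div_assoc, div_le_iff₀ h]
    have : 0 ≤ ‖kk x s‖ * (1+|t|) := by positivity
    nlinarith
  linarith
end

end

section
open Metric Complex MeasureTheory Set Filter Asymptotics Topology

lemma avg_lint {g : ℝ → ENNReal} (hg : Measurable g) :
    ∫⁻ v, g v = ∫⁻ T, ∫⁻ v in Icc (T - 1/2) (T + 1/2), g v := by
  have e1 : ∀ T : ℝ, ∫⁻ v in Icc (T - 1/2) (T + 1/2), g v = ∫⁻ v, {p : ℝ × ℝ | |p.2 - p.1| ≤ 1/2}.indicator (fun p => g p.2) (T, v) := by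
    intro T
    rw [← lintegral_indicator measurableSet_Icc]
    congr 1; funext v
    by_cases h : v ∈ Icc (T - 1/2) (T + 1/2)
    · rw [indicator_of_mem h, indicator_of_mem]
      simp only [mem_setOf_eq]
      rw [abs_le]; constructor <;> linarith [h.1, h.2]
    · rw [indicator_of_notMem h, indicator_of_notMem]
      simp only [mem_setOf_eq]
      intro hh
      rw [abs_le] at hh
      exact h ⟨by linarith [hh.1], by linarith [hh.2]⟩
  have hS : MeasurableSet {p : ℝ × ℝ | |p.2 - p.1| ≤ 1/2} :=
    measurableSet_le (by fun_prop) measurable_const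
  simp only [e1]
  rw [lintegral_lintegral_swap (f := fun T v => {p : ℝ × ℝ | |p.2 - p.1| ≤ 1/2}.indicator (fun p => g p.2) (T, v))]
  · congr 1; funext v
    have : ∀ T : ℝ, {p : ℝ × ℝ | |p.2 - p.1| ≤ 1/2}.indicator (fun p => g p.2) (T, v) =
        (Icc (v - 1/2) (v + 1/2)).indicator (fun _ => g v) T := by
      intro T
      by_cases h : T ∈ Icc (v - 1/2) (v + 1/2)
      · rw [indicator_of_mem h, indicator_of_mem]
        simp only [mem_setOf_eq]
        rw [abs_le]; constructor <;> linarith [h.1, h.2]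
      · rw [indicator_of_notMem h, indicator_of_notMem]
        simp only [mem_setOf_eq]
        intro hh
        rw [abs_le] at hh
        exact h ⟨by linarith [hh.2], by linarith [hh.1]⟩
    simp only [this]
    rw [lintegral_indicator measurableSet_Icc, lintegral_const, Measure.restrict_apply_univ, Real.volume_Icc]
    norm_num
  · exact ((hg.comp measurable_snd).indicator hS).aemeasurable

lemma integral_le_of_lint {f : ℝ → ℝ} (hf : ∀ t, 0 ≤ f t) {B : ℝ} (hB : 0 ≤ B)
    (h : ∫⁻ t, ENNReal.ofReal (f t) ≤ ENNReal.ofReal B) : ∫ t, f t ≤ B := by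
  by_cases hi : Integrable f
  · rw [integral_eq_lintegral_of_nonneg_ae (ae_of_all _ hf) hi.1]
    exact ENNReal.toReal_le_of_le_ofReal hB h
  · rw [integral_undef hi]; exact hB

lemma avg_bound {R κ W L : ℝ → ℝ} (hR : Continuous R) (hR0 : ∀ t, 0 ≤ R t) (hκ : Continuous κ) (hκ0 : ∀ t, 0 ≤ κ t)
    (hW0 : ∀ t, 0 ≤ W t)
    (hL : ∀ T, ∫ v in (T-1/2)..(T+1/2), R v ≤ L T) (hκW : ∀ T v, |v - T| ≤ 1/2 → κ v ≤ W T)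
    {B : ℝ} (hi : Integrable (fun T => W T * L T)) (hB : ∫ T, W T * L T ≤ B) :
    ∫ t, R t * κ t ≤ B := by
  have hL0 : ∀ T, 0 ≤ L T := fun T => (intervalIntegral.integral_nonneg (by linarith) fun v _ => hR0 v).trans (hL T)
  have hB0 : 0 ≤ B := (integral_nonneg fun T => mul_nonneg (hW0 T) (hL0 T)).trans hB
  refine integral_le_of_lint (fun t => mul_nonneg (hR0 t) (hκ0 t)) hB0 ?_
  rw [avg_lint (by fun_prop)]
  refine le_trans ?_ (ENNReal.ofReal_le_ofReal hB)
  rw [ofReal_integral_eq_lintegral_ofReal hi (ae_of_all _ fun T => mul_nonneg (hW0 T) (hL0 T))]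
  refine lintegral_mono fun T => ?_
  have h1 : ∫⁻ v in Icc (T - 1/2) (T + 1/2), ENNReal.ofReal (R v * κ v) ≤ ∫⁻ v in Icc (T - 1/2) (T + 1/2), ENNReal.ofReal (W T * R v) := by
    refine setLIntegral_mono (by fun_prop) fun v hv => ENNReal.ofReal_le_ofReal ?_
    have := hκW T v (by rw [abs_le]; constructor <;> linarith [hv.1, hv.2])
    have := hR0 v
    nlinarith
  refine h1.trans ?_
  have hint : IntegrableOn (fun v => W T * R v) (Icc (T - 1/2) (T + 1/2)) := (by fun_prop : Continuous fun v => W T * R v).integrableOn_Icc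
  rw [← ofReal_integral_eq_lintegral_ofReal hint (ae_of_all _ fun v => mul_nonneg (hW0 T) (hR0 v))]
  refine ENNReal.ofReal_le_ofReal ?_
  rw [integral_const_mul, integral_Icc_eq_integral_Ioc, ← intervalIntegral.integral_of_le (by linarith)]
  exact mul_le_mul_of_nonneg_left (hL T) (hW0 T)

lemma abs_int (j : ℝ → ℝ) (i3 : IntegrableOn j (Ioi 0)) : Integrable (fun T => j |T|) := by
  have a1 : IntegrableOn (fun T => j |T|) (Ioi 0) := by
    refine i3.congr_fun (fun T hT => ?_) measurableSet_Ioi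
    rw [abs_of_pos hT]
  have a2 : IntegrableOn (fun T => j |T|) (Iic 0) := by
    have h : IntegrableOn (fun T => j |T|) (Ioi (-0)) := by rw [neg_zero]; exact a1
    have h2 := h.comp_neg_Iio
    simp only [abs_neg] at h2
    exact (integrableOn_Iic_iff_integrableOn_Iio (by simp)).2 h2
  have := a2.union a1
  rw [Iic_union_Ioi] at this
  exact integrableOn_univ.1 this

set_option maxHeartbeats 1000000 in
lemma J_bound {Y : ℝ} (hY : 1 ≤ Y) :
    Integrable (fun T : ℝ => ((1 + |T|) * √(1 + |T|/Y))⁻¹) ∧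
      ∫ T : ℝ, ((1 + |T|) * √(1 + |T|/Y))⁻¹ ≤ 2 * (Real.log (1 + Y) + 2) := by
  set j : ℝ → ℝ := fun T => ((1 + T) * √(1 + T/Y))⁻¹ with hj
  have hjc : ContinuousOn j (Ici 0) := by
    refine ContinuousOn.inv₀ (by fun_prop) fun T hT => ?_
    have : 0 ≤ T := hT
    positivity
  have hj0 : ∀ T, 0 ≤ T → 0 ≤ j T := fun T hT => by simp only [hj]; positivity
  have i1 : IntegrableOn j (Ioc 0 Y) :=
    (ContinuousOn.integrableOn_Icc (hjc.mono Icc_subset_Ici_self)).mono_set Ioc_subset_Icc_self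
  have b1 : ∫ T in Ioc 0 Y, j T ≤ Real.log (1 + Y) := by
    have : ∫ T in Ioc 0 Y, j T ≤ ∫ T in Ioc 0 Y, (1 + T)⁻¹ := by
      refine setIntegral_mono_on i1 ?_ measurableSet_Ioc fun T hT => ?_
      · refine (ContinuousOn.integrableOn_Icc (ContinuousOn.inv₀ (by fun_prop) fun T hT => ?_)).mono_set Ioc_subset_Icc_self
        linarith [hT.1]
      · have h0 := hT.1
        refine inv_anti₀ (by linarith) ?_
        have : 1 ≤ √(1 + T/Y) := Real.one_le_sqrt.2 (by have : 0 ≤ T/Y := by positivity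
                                                        linarith)
        nlinarith
    refine this.trans (le_of_eq ?_)
    rw [← intervalIntegral.integral_of_le (by linarith), intervalIntegral.integral_comp_add_left (fun x => x⁻¹),
      integral_inv_of_pos (by norm_num) (by linarith)]
    simp
  have maj : ∀ T ∈ Ioi Y, j T ≤ √Y * T ^ (-(3:ℝ)/2) := by
    intro T hT
    have hT0 : 0 < T := by linarith [mem_Ioi.1 hT]
    have hY0 : 0 < Y := by linarith
    have : √Y * T ^ (-(3:ℝ)/2) = (T * √(T/Y))⁻¹ := by
      rw [show -(3:ℝ)/2 = -(1 + 1/2) by norm_num, Real.rpow_neg hT0.le, Real.rpow_add hT0, Real.rpow_one, ← Real.sqrt_eq_rpow,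
        Real.sqrt_div hT0.le]
      have : √Y ≠ 0 := (Real.sqrt_pos.2 hY0).ne'
      have : √T ≠ 0 := (Real.sqrt_pos.2 hT0).ne'
      field_simp
    rw [this]
    refine inv_anti₀ (by positivity) ?_
    gcongr <;> linarith
  have im : IntegrableOn (fun T => √Y * T ^ (-(3:ℝ)/2)) (Ioi Y) :=
    (integrableOn_Ioi_rpow_of_lt (by norm_num) (by linarith)).const_mul _
  have i2 : IntegrableOn j (Ioi Y) := by
    refine Integrable.mono' im ?_ ((ae_restrict_iff' measurableSet_Ioi).2 (ae_of_all _ fun T hT => ?_))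
    · exact (hjc.mono (fun T hT => by simp only [mem_Ici]; linarith [mem_Ioi.1 hT])).aestronglyMeasurable measurableSet_Ioi
    · rw [Real.norm_of_nonneg (hj0 T (by linarith [mem_Ioi.1 hT]))]; exact maj T hT
  have b2 : ∫ T in Ioi Y, j T ≤ 2 := by
    refine (setIntegral_mono_on i2 im measurableSet_Ioi maj).trans (le_of_eq ?_)
    rw [integral_const_mul, integral_Ioi_rpow_of_lt (by norm_num) (by linarith)]
    rw [show -(3:ℝ)/2 + 1 = -(1/2) by norm_num, Real.rpow_neg (by linarith), ← Real.sqrt_eq_rpow]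
    have : √Y ≠ 0 := (Real.sqrt_pos.2 (by linarith)).ne'
    field_simp
  have hun : Ioc 0 Y ∪ Ioi Y = Ioi 0 := Ioc_union_Ioi_eq_Ioi (by linarith)
  have i3 : IntegrableOn j (Ioi 0) := by rw [← hun]; exact i1.union i2
  have b3 : ∫ T in Ioi 0, j T ≤ Real.log (1 + Y) + 2 := by
    rw [← hun, setIntegral_union (Ioc_disjoint_Ioi le_rfl) measurableSet_Ioi i1 i2]; linarith
  refine ⟨abs_int j i3, ?_⟩
  have h4 : ∫ T : ℝ, j |T| = 2 * ∫ T in Ioi 0, j T := integral_comp_abs (f := j)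
  have h5 : ∫ T : ℝ, j |T| ≤ 2 * (Real.log (1 + Y) + 2) := by rw [h4]; linarith
  exact h5

lemma lg_W {d : ℕ} [NeZero d] {x : ℝ} (hx : 2 ≤ x) (T : ℝ) :
    lg d T ≤ 5 * Real.log (d * x) * √(1 + |T|/√x) := by
  have hd : (1:ℝ) ≤ d := by exact_mod_cast Nat.pos_of_ne_zero (NeZero.ne d)
  have h : 0 < √x := Real.sqrt_pos.2 (by linarith)
  have h1x : 1 ≤ √x := Real.one_le_sqrt.2 (by linarith)
  have hsx : √x ≤ x := by
    rw [Real.sqrt_le_left (by linarith)]; nlinarith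
  have hT := abs_nonneg T
  set v := |T|/√x with hv
  have hv0 : 0 ≤ v := by positivity
  have hTv : |T| = v * √x := by rw [hv]; field_simp
  have h1 : d * (|T| + 2) ≤ (d*x)^2 * (1 + v) := by
    calc d * (|T| + 2) ≤ d * (x * x * (1 + v)) := by
          gcongr
          rw [hTv]
          have : v * √x ≤ v * (x * x) := by gcongr; nlinarith
          nlinarith
      _ ≤ d * d * (x * x * (1+v)) := by
          gcongr
          nlinarith
      _ = _ := by ring
  have h2 : lg d T ≤ Real.log ((d*x)^2 * (1+v)) := Real.log_le_log (by positivity) h1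
  rw [Real.log_mul (by positivity) (by positivity), Real.log_pow] at h2
  have h3 : Real.log (1+v) ≤ 2 * √(1+v) := by
    have := Real.log_le_rpow_div (x := 1+v) (ε := 1/2) (by positivity) (by norm_num)
    rw [← Real.sqrt_eq_rpow] at this; linarith
  have h4 : 1 ≤ √(1+v) := Real.one_le_sqrt.2 (by linarith)
  have h5 : Real.log 2 ≤ Real.log (d*x) := Real.log_le_log (by norm_num) (by nlinarith)
  have := Real.log_two_gt_d9
  push_cast at h2
  nlinarith [mul_nonneg (by linarith : 0 ≤ Real.log (d*x) - 0.69) (by linarith : 0 ≤ √(1+v) - 1)]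

noncomputable def C0 : ℝ := 10000000000

lemma smoothed {d : ℕ} [NeZero d] (χ : DirichletCharacter ℂ d) (hχ : χ ≠ 1) (hr : ∀ a, (χ a).im = 0)
    (hz : ∀ s : ℂ, 0 < s.re → ff χ s = 0 → s.re = 1/2) {x : ℝ} (hx : 2 ≤ x) :
    Summable (fun n : ℕ => aa χ n * ww x n) ∧
    |∑' n : ℕ, aa χ n * ww x n - ∫ u in Ioi (1:ℝ), ww x u| ≤ C0 * √x * Real.log x * Real.log (d * x) := by
  have hd : (1:ℝ) ≤ d := by exact_mod_cast Nat.pos_of_ne_zero (NeZero.ne d)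
  have h : 0 < √x := Real.sqrt_pos.2 (by linarith)
  have h1x : 1 ≤ √x := Real.one_le_sqrt.2 (by linarith)
  have hsx : √x ≤ x := by
    rw [Real.sqrt_le_left (by linarith)]; nlinarith
  have hlog : Real.log 2 ≤ Real.log x := Real.log_le_log (by norm_num) hx
  have hl2 := Real.log_two_gt_d9
  set ε : ℝ := 1/(2 * Real.log x) with hε
  have hlp : 0 < Real.log x := by linarith
  have hldx : 0 < Real.log (d*x) := Real.log_pos (by nlinarith)
  have hε0 : 0 < ε := by positivity
  have hε1 : ε ≤ 3/4 := by
    rw [hε, div_le_iff₀ (by positivity)]; linarith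
  have hk := kernel_pair hx
  obtain ⟨hs, he⟩ := explicit hk hε0 (by linarith) χ hχ hr hz
  refine ⟨hs, he.trans ?_⟩
  obtain ⟨j1, j2⟩ := J_bound h1x
  have hW : ∀ T v : ℝ, |v - T| ≤ 1/2 → ((1 + |v|) * (1 + |v|/√x))⁻¹ ≤ 9/4 * ((1 + |T|) * (1 + |T|/√x))⁻¹ := by
    intro T v hvT
    have h1 : |T| ≤ |v| + 1/2 := by
      have := abs_sub_abs_le_abs_sub T v
      rw [abs_sub_comm] at this; linarith
    have hv := abs_nonneg v
    have hT := abs_nonneg T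
    have h2 : 1 + |T| ≤ 3/2 * (1 + |v|) := by linarith
    have h3 : 1 + |T|/√x ≤ 3/2 * (1 + |v|/√x) := by
      have a1 : |T|/√x ≤ (|v|+1/2)/√x := by gcongr
      have a2 : (1/2)/√x ≤ 1/2 := div_le_self (by norm_num) h1x
      rw [add_div] at a1
      have : 0 ≤ |v|/√x := by positivity
      linarith
    have h4 : (1 + |T|) * (1 + |T|/√x) ≤ (9/4) * ((1 + |v|) * (1 + |v|/√x)) := by
      calc _ ≤ (3/2 * (1 + |v|)) * (3/2 * (1 + |v|/√x)) := by gcongr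
        _ = _ := by ring
    rw [← div_eq_mul_inv, le_div_iff₀ (by positivity), inv_mul_le_iff₀ (by positivity)]
    linarith
  set c : ℝ := 9/4 * (147 * √x) * (127500 * (5 * Real.log (d*x))) with hc
  have hc0 : 0 ≤ c := by positivity
  set W : ℝ → ℝ := fun T => 9/4 * (147 * √x) * ((1 + |T|) * (1 + |T|/√x))⁻¹ with hWd
  set Lf : ℝ → ℝ := fun T => 127500 * (5 * Real.log (d*x) * √(1 + |T|/√x)) with hLf
  have eWL : ∀ T, W T * Lf T = c * ((1 + |T|) * √(1 + |T|/√x))⁻¹ := by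
    intro T
    simp only [hWd, hLf, hc]
    have hp : 0 < 1 + |T|/√x := by positivity
    have : (1 + |T|/√x) = √(1 + |T|/√x) * √(1 + |T|/√x) := (Real.mul_self_sqrt hp.le).symm
    have hq : √(1 + |T|/√x) ≠ 0 := (Real.sqrt_pos.2 hp).ne'
    set q := √(1 + |T|/√x)
    rw [this]
    have : (1 + |T|) ≠ 0 := by positivity
    field_simp
  refine avg_bound (R := fun t => |(logDeriv (ff χ) (((1/2 + ε : ℝ) : ℂ) + t * I)).re|)
    (κ := fun t => ‖kk x (((1/2 + ε : ℝ) : ℂ) + t * I)‖) (W := W) (L := Lf) ?_ (fun t => abs_nonneg _)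
    (k_cont hk (by linarith)).norm (fun t => norm_nonneg _) (fun t => by simp only [hWd]; positivity) ?_ ?_ ?_ ?_
  · refine (continuous_re.comp ?_).abs
    refine continuous_iff_continuousAt.2 fun v => ?_
    have hne : ff χ (((1/2 + ε : ℝ) : ℂ) + v * I) ≠ 0 := by
      intro h
      have := hz _ (by simp; linarith) h
      simp at this; linarith
    have : ContinuousAt (logDeriv (ff χ)) (((1/2 + ε : ℝ) : ℂ) + v * I) := by
      refine ContinuousAt.div ?_ (ff_diff χ hχ).continuous.continuousAt hne
      exact ((ff_diff χ hχ).contDiff (n := 1)).continuous_deriv le_rfl |>.continuousAt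
    exact ContinuousAt.comp' (f := fun v : ℝ => ((1/2 + ε : ℝ) : ℂ) + v * I) this (by fun_prop)
  · intro T
    refine (logDeriv_avg χ hχ hz hε0 (by linarith) T).trans ?_
    simp only [hLf]
    have := lg_W (d := d) hx T
    gcongr
  · intro T v hvT
    refine (kk_bound hx (t := v)).trans ?_
    have := hW T v hvT
    simp only [hWd]
    calc _ ≤ 147 * √x * (9/4 * ((1 + |T|) * (1 + |T|/√x))⁻¹) := by gcongr
      _ = _ := by ring
  · simp only [eWL]; exact j1.const_mul c
  · simp only [eWL]
    rw [integral_const_mul]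
    have h3 : Real.log (1 + √x) ≤ 2 * Real.log x := by
      have : Real.log (1 + √x) ≤ Real.log (x^2) := Real.log_le_log (by linarith) (by nlinarith)
      rwa [Real.log_pow] at this
    calc _ ≤ c * (2 * (Real.log (1 + √x) + 2)) := by gcongr
      _ ≤ c * (10 * Real.log x) := mul_le_mul_of_nonneg_left (by linarith) hc0
      _ ≤ _ := by
        rw [hc, C0]
        have : 0 ≤ √x * Real.log x * Real.log (d*x) := by positivity
        nlinarith

end

section
open Metric Complex MeasureTheory Set Filter Asymptotics Topology

noncomputable def bb {d : ℕ} (χ : DirichletCharacter ℂ d) (n : ℕ) : ℝ :=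
  if n.Prime then aa χ n else 0

noncomputable def SS {d : ℕ} (χ : DirichletCharacter ℂ d) (x : ℝ) : ℝ := ∑ n ∈ Finset.Icc 0 ⌊x⌋₊, aa χ n
noncomputable def TT {d : ℕ} (χ : DirichletCharacter ℂ d) (x : ℝ) : ℝ := ∑ n ∈ Finset.Icc 0 ⌊x⌋₊, bb χ n

lemma aa_small {d : ℕ} (χ : DirichletCharacter ℂ d) {n : ℕ} (hn : n < 2) : aa χ n = 0 := by
  rw [aa]
  interval_cases n <;> simp

lemma re_le_one {d : ℕ} (χ : DirichletCharacter ℂ d) (a : ZMod d) : (χ a).re ≤ 1 :=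
  (Complex.re_le_norm _).trans (χ.norm_le_one a)

lemma SS_TT {d : ℕ} (χ : DirichletCharacter ℂ d) {x : ℝ} (hx : 2 ≤ x) :
    0 ≤ SS χ x - TT χ x ∧ SS χ x - TT χ x ≤ 4 * √x * Real.log x := by
  have e : SS χ x - TT χ x = ∑ n ∈ Finset.Icc 0 ⌊x⌋₊, (aa χ n - bb χ n) := by
    rw [SS, TT, Finset.sum_sub_distrib]
  have h2 := Chebyshev.psi_sub_theta_le (x := x) (by linarith)
  have e2 : Chebyshev.psi x - Chebyshev.theta x = ∑ n ∈ Finset.Icc 0 ⌊x⌋₊, (if n.Prime then 0 else ArithmeticFunction.vonMangoldt n) := by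
    rw [Chebyshev.psi_eq_sum_Icc, Chebyshev.theta_eq_sum_Icc, Finset.sum_filter, ← Finset.sum_sub_distrib]
    refine Finset.sum_congr rfl fun n _ => ?_
    split_ifs with h
    · rw [ArithmeticFunction.vonMangoldt_apply_prime h]; ring
    · ring
  constructor
  · rw [e]
    refine Finset.sum_nonneg fun n _ => ?_
    rw [bb]; split_ifs
    · simp
    · simpa using aa_nonneg χ n
  · have : SS χ x - TT χ x ≤ 2 * (Chebyshev.psi x - Chebyshev.theta x) := by
      rw [e, e2, Finset.mul_sum]
      refine Finset.sum_le_sum fun n _ => ?_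
      rw [bb]; split_ifs
      · simp
      · rw [aa]
        have h1 := re_le_one χ n
        have h3 : 0 ≤ ArithmeticFunction.vonMangoldt n := ArithmeticFunction.vonMangoldt_nonneg
        nlinarith
    linarith

section
variable {d : ℕ} [NeZero d] (χ : DirichletCharacter ℂ d) (hχ : χ ≠ 1) (hr : ∀ a, (χ a).im = 0)
    (hz : ∀ s : ℂ, 0 < s.re → ff χ s = 0 → s.re = 1/2)
include hχ hr hz

lemma SS_upper {x : ℝ} (hx : 2 ≤ x) :
    SS χ x ≤ x + √x + C0 * √x * Real.log x * Real.log (d * x) := by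
  obtain ⟨h1, h2⟩ := smoothed χ hχ hr hz hx
  have h3 : SS χ x ≤ ∑' n : ℕ, aa χ n * ww x n := by
    have : SS χ x = ∑ n ∈ Finset.Icc 0 ⌊x⌋₊, aa χ n * ww x n := by
      refine Finset.sum_congr rfl fun n hn => ?_
      rcases lt_or_ge n 2 with h | h
      · rw [aa_small χ h]; simp
      · rw [ww_one hx (by exact_mod_cast h), mul_one]
        exact (Nat.le_floor_iff (by linarith)).1 (Finset.mem_Icc.1 hn).2
    rw [this]
    exact h1.sum_le_tsum _ fun n _ => mul_nonneg (aa_nonneg χ n) (ww_mem hx n).1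
  have h4 := (abs_le.1 h2).2
  have h5 := (ww_int hx).2
  linarith

lemma SS_lower {x y : ℝ} (hy : 2 ≤ y) (hyx : y + √y ≤ x) :
    y - 2 - C0 * √y * Real.log y * Real.log (d * y) ≤ SS χ x := by
  obtain ⟨h1, h2⟩ := smoothed χ hχ hr hz hy
  have h3 : ∑' n : ℕ, aa χ n * ww y n ≤ SS χ x := by
    rw [tsum_eq_sum (s := Finset.Icc 0 ⌊x⌋₊)]
    · refine Finset.sum_le_sum fun n hn => ?_
      have := ww_mem hy n
      have := aa_nonneg χ n
      nlinarith
    · intro n hn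
      have : x < n := by
        rw [Finset.mem_Icc] at hn
        push Not at hn
        exact Nat.lt_of_floor_lt (hn (Nat.zero_le _))
      rw [ww_big hy (by linarith), mul_zero]
  have h4 := (abs_le.1 h2).1
  have h5 := (ww_int hy).1
  linarith

lemma TT_bound {x : ℝ} (hx : 2 ≤ x) :
    |TT χ x - x| ≤ (C0 + 20) * (√x * (Real.log x * Real.log (d * x))) := by
  have hd : (1:ℝ) ≤ d := by exact_mod_cast Nat.pos_of_ne_zero (NeZero.ne d)
  have hl2 := Real.log_two_gt_d9
  have hl : 0.69 ≤ Real.log x := by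
    have := Real.log_le_log (by norm_num) hx; linarith
  have hl' : Real.log x ≤ Real.log (d*x) := Real.log_le_log (by linarith) (by nlinarith)
  have hC : (0:ℝ) ≤ C0 := by rw [C0]; norm_num
  have hs : 1.41 ≤ √x := Real.le_sqrt_of_sq_le (by norm_num; linarith)
  have hL : 0.47 ≤ Real.log x * Real.log (d*x) := by nlinarith
  have hS0 : 0 ≤ SS χ x := Finset.sum_nonneg fun n _ => aa_nonneg χ n
  have hu := SS_upper χ hχ hr hz hx
  have h4 := SS_TT χ hx
  have h6 : 4 * √x * Real.log x ≤ 6 * (√x * (Real.log x * Real.log (d * x))) := by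
    have : 0 ≤ √x * Real.log x := by positivity
    nlinarith
  have h7 : √x + 2 ≤ 6 * (√x * (Real.log x * Real.log (d * x))) := by nlinarith
  have h8 : x - √x - 2 - C0 * (√x * (Real.log x * Real.log (d * x))) - 6 * (√x * (Real.log x * Real.log (d * x))) ≤ SS χ x := by
    have hE : 0 ≤ √x * (Real.log x * Real.log (d * x)) := by positivity
    rcases lt_or_ge x 4 with h | h
    · nlinarith
    · have hs2 : 2 ≤ √x := Real.le_sqrt_of_sq_le (by norm_num; linarith)
      have hsq : √x * √x = x := Real.mul_self_sqrt (by linarith)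
      have hy : 2 ≤ x - √x := by nlinarith
      have hyx : √(x - √x) ≤ √x := Real.sqrt_le_sqrt (by linarith)
      have := SS_lower χ hχ hr hz hy (x := x) (by linarith)
      have h9 : C0 * √(x-√x) * Real.log (x-√x) * Real.log (d * (x-√x)) ≤ C0 * √x * Real.log x * Real.log (d * x) := by
        have a1 : Real.log (x - √x) ≤ Real.log x := Real.log_le_log (by linarith) (by linarith)
        have a2 : Real.log (d*(x - √x)) ≤ Real.log (d*x) := Real.log_le_log (by nlinarith) (by nlinarith)
        have a3 : 0 ≤ Real.log (x - √x) := Real.log_nonneg (by linarith)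
        have a4 : 0 ≤ Real.log (d*(x - √x)) := Real.log_nonneg (by nlinarith)
        gcongr
      linarith
  rw [abs_le]
  constructor <;> nlinarith
end

end

section
open Metric Complex MeasureTheory Set Filter Asymptotics Topology

lemma log_ge_of {u : ℝ} (hu : 2 ≤ u) : 0.69 ≤ Real.log u := by
  have := Real.log_le_log (by norm_num) hu
  linarith [Real.log_two_gt_d9]

lemma Li_parts {x : ℝ} (hx : 2 ≤ x) :
    Li x = x / Real.log x - 2 / Real.log 2 + ∫ t in (2:ℝ)..x, 1 / Real.log t ^ 2 := by
  have hne : ∀ u ∈ uIcc 2 x, u ≠ 0 ∧ Real.log u ≠ 0 := by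
    intro u hu
    rw [uIcc_of_le hx] at hu
    have := log_ge_of hu.1
    exact ⟨by linarith [hu.1], by linarith⟩
  have i1 : IntervalIntegrable (fun t => 1 / Real.log t) volume 2 x :=
    ContinuousOn.intervalIntegrable fun u hu => by
      have := hne u hu
      exact (ContinuousAt.div (by fun_prop) (Real.continuousAt_log this.1) this.2).continuousWithinAt
  have i2 : IntervalIntegrable (fun t => 1 / Real.log t ^ 2) volume 2 x :=
    ContinuousOn.intervalIntegrable fun u hu => by
      have := hne u hu
      exact (ContinuousAt.div (by fun_prop) ((Real.continuousAt_log this.1).pow 2) (pow_ne_zero 2 this.2)).continuousWithinAt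
  have := intervalIntegral.integral_eq_sub_of_hasDerivAt (a := 2) (b := x) (f := fun t => t / Real.log t)
    (f' := fun t => 1 / Real.log t - 1 / Real.log t ^ 2) (fun u hu => by
      have h := hne u hu
      refine ((hasDerivAt_id u).div (Real.hasDerivAt_log h.1) h.2).congr_deriv ?_
      have h1 := h.1
      have h2 := h.2
      simp only [id]
      field_simp) (i1.sub i2)
  rw [intervalIntegral.integral_sub i1 i2] at this
  rw [Li]; linarith

section
variable {d : ℕ} [NeZero d] (χ : DirichletCharacter ℂ d) 

lemma bb_small {n : ℕ} (hn : n < 2) : bb χ n = 0 := by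
  rw [bb, aa_small χ hn]; simp

lemma TT_int {x : ℝ} : IntegrableOn (fun t => (t * Real.log t ^ 2)⁻¹ * TT χ t) (Icc 2 x) := by
  unfold TT
  refine integrableOn_mul_sum_Icc _ (by norm_num) <| ContinuousOn.integrableOn_Icc fun u hu ↦
    ContinuousAt.continuousWithinAt ?_
  have h1 : u ≠ 0 := by linarith [hu.1]
  have : u * Real.log u ^ 2 ≠ 0 := mul_ne_zero h1 (pow_ne_zero 2 (by linarith [log_ge_of hu.1]))
  exact ContinuousAt.inv₀ (continuousAt_id.mul ((Real.continuousAt_log h1).pow 2)) this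

lemma abel {x : ℝ} (hx : 2 ≤ x) :
    ∑ n ∈ Finset.Icc 0 ⌊x⌋₊, (Real.log n)⁻¹ * bb χ n =
      TT χ x / Real.log x + ∫ t in (2:ℝ)..x, (t * Real.log t ^ 2)⁻¹ * TT χ t := by
  have hd : ∀ u ∈ Icc 2 x, HasDerivAt (fun u => (Real.log u)⁻¹) (-(u * Real.log u ^ 2)⁻¹) u := by
    intro u hu
    have h1 : u ≠ 0 := by linarith [hu.1]
    have h2 : Real.log u ≠ 0 := by linarith [log_ge_of hu.1]
    refine ((Real.hasDerivAt_log h1).inv h2).congr_deriv ?_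
    field_simp
  rw [sum_mul_eq_sub_integral_mul₁ (bb χ) (f := fun n ↦ (Real.log n)⁻¹) (bb_small χ (by norm_num)) (bb_small χ (by norm_num)),
    ← intervalIntegral.integral_of_le hx]
  · have : ∫ t in (2:ℝ)..x, deriv (fun u => (Real.log u)⁻¹) t * ∑ k ∈ Finset.Icc 0 ⌊t⌋₊, bb χ k
       = ∫ t in (2:ℝ)..x, -((t * Real.log t ^ 2)⁻¹ * TT χ t) := by
      refine intervalIntegral.integral_congr fun u hu => ?_
      rw [uIcc_of_le hx] at hu
      rw [(hd u hu).deriv, TT]; ring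
    rw [this, intervalIntegral.integral_neg, TT]; ring
  · intro u hu; exact (hd u hu).differentiableAt
  · refine IntegrableOn.congr_fun (f := fun u => -(u * Real.log u ^ 2)⁻¹) ?_ (fun u hu => (hd u hu).deriv.symm) measurableSet_Icc
    refine ContinuousOn.integrableOn_Icc fun u hu ↦ ContinuousAt.continuousWithinAt ?_
    have h1 : u ≠ 0 := by linarith [hu.1]
    have : u * Real.log u ^ 2 ≠ 0 := mul_ne_zero h1 (pow_ne_zero 2 (by linarith [log_ge_of hu.1]))
    exact (ContinuousAt.inv₀ (continuousAt_id.mul ((Real.continuousAt_log h1).pow 2)) this).neg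

lemma pi_bound (hχ : χ ≠ 1) (hr : ∀ a, (χ a).im = 0)
    (hz : ∀ s : ℂ, 0 < s.re → ff χ s = 0 → s.re = 1/2) {x : ℝ} (hx : 2 ≤ x) :
    |∑ n ∈ Finset.Icc 0 ⌊x⌋₊, (Real.log n)⁻¹ * bb χ n - Li x| ≤ (4 * C0 + 100) * (√x * Real.log (d * x)) := by
  have hd : (1:ℝ) ≤ d := by exact_mod_cast Nat.pos_of_ne_zero (NeZero.ne d)
  have hC : (0:ℝ) ≤ C0 := by rw [C0]; norm_num
  have hl := log_ge_of hx
  have hl' : Real.log x ≤ Real.log (d*x) := Real.log_le_log (by linarith) (by nlinarith)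
  have hs : 1.41 ≤ √x := Real.le_sqrt_of_sq_le (by norm_num; linarith)
  have i1 : IntervalIntegrable (fun t => (t * Real.log t ^ 2)⁻¹ * TT χ t) volume 2 x :=
    (intervalIntegrable_iff_integrableOn_Icc_of_le hx).2 (TT_int χ)
  have i2 : IntervalIntegrable (fun t => 1 / Real.log t ^ 2) volume 2 x :=
    ContinuousOn.intervalIntegrable fun u hu => by
      rw [uIcc_of_le hx] at hu
      have h1 : u ≠ 0 := by linarith [hu.1]
      have h2 : Real.log u ≠ 0 := by linarith [log_ge_of hu.1]
      exact (ContinuousAt.div (by fun_prop) ((Real.continuousAt_log h1).pow 2) (pow_ne_zero 2 h2)).continuousWithinAt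
  have e : ∑ n ∈ Finset.Icc 0 ⌊x⌋₊, (Real.log n)⁻¹ * bb χ n - Li x = (TT χ x - x) / Real.log x + 2 / Real.log 2 +
      ∫ t in (2:ℝ)..x, ((t * Real.log t ^ 2)⁻¹ * TT χ t - 1 / Real.log t ^ 2) := by
    rw [abel χ hx, Li_parts hx, intervalIntegral.integral_sub i1 i2]; ring
  have b1 : |(TT χ x - x) / Real.log x| ≤ (C0 + 20) * (√x * Real.log (d*x)) := by
    rw [abs_div, abs_of_pos (by linarith : 0 < Real.log x), div_le_iff₀ (by linarith)]
    refine (TT_bound χ hχ hr hz hx).trans (le_of_eq ?_); ring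
  have b2 : |2 / Real.log 2| ≤ 3 := by
    have := log_ge_of (le_refl 2)
    rw [abs_of_nonneg (by positivity), div_le_iff₀ (by linarith)]; linarith
  have b3 : |∫ t in (2:ℝ)..x, ((t * Real.log t ^ 2)⁻¹ * TT χ t - 1 / Real.log t ^ 2)| ≤ 3 * (C0 + 20) * (√x * Real.log (d*x)) := by
    have hi : IntervalIntegrable (fun t : ℝ => t ^ (-(1/2):ℝ)) volume 2 x := intervalIntegral.intervalIntegrable_rpow' (by norm_num)
    have : ‖∫ t in (2:ℝ)..x, ((t * Real.log t ^ 2)⁻¹ * TT χ t - 1 / Real.log t ^ 2)‖ ≤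
       ∫ t in (2:ℝ)..x, (3/2 * (C0 + 20) * Real.log (d*x)) * t ^ (-(1/2):ℝ) := by
      refine intervalIntegral.norm_integral_le_of_norm_le hx (ae_of_all _ fun t ht => ?_) (hi.const_mul _)
      have ht2 : 2 ≤ t := ht.1.le
      have hlt := log_ge_of ht2
      have hB := TT_bound χ hχ hr hz ht2
      have hst : 0 < √t := Real.sqrt_pos.2 (by linarith)
      have hsq : √t * √t = t := Real.mul_self_sqrt (by linarith)
      have e1 : (t * Real.log t ^ 2)⁻¹ * TT χ t - 1 / Real.log t ^ 2 = (t * Real.log t ^ 2)⁻¹ * (TT χ t - t) := by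
        have : t ≠ 0 := by linarith
        have : Real.log t ≠ 0 := by linarith
        field_simp
      have hll : Real.log (d*t) ≤ Real.log (d*x) := Real.log_le_log (by nlinarith) (by nlinarith [ht.2])
      have ht0 : 0 < t := by linarith
      have hlt0 : 0 < Real.log t := by linarith
      have hlx0 : 0 < Real.log (d*x) := by linarith
      rw [e1, Real.norm_eq_abs, abs_mul, abs_of_nonneg (by positivity), Real.rpow_neg (by linarith), ← Real.sqrt_eq_rpow]
      calc _ ≤ (t * Real.log t ^ 2)⁻¹ * ((C0 + 20) * (√t * (Real.log t * Real.log (d * x)))) := by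
            refine mul_le_mul_of_nonneg_left (hB.trans ?_) (by positivity)
            gcongr
        _ = (Real.log t)⁻¹ * (C0 + 20) * Real.log (d * x) * (√t)⁻¹ := by
            nth_rw 1 [← hsq]
            field_simp
        _ ≤ _ := by
            have : (Real.log t)⁻¹ ≤ 3/2 := by
              rw [inv_le_comm₀ hlt0 (by norm_num)]; norm_num; linarith
            gcongr
    rw [Real.norm_eq_abs] at this
    refine this.trans ?_
    rw [intervalIntegral.integral_const_mul, integral_rpow (Or.inl (by norm_num))]
    rw [show (-(1/2):ℝ) + 1 = 1/2 by norm_num, ← Real.sqrt_eq_rpow, ← Real.sqrt_eq_rpow]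
    have h1 : (√x - √2) / (1/2) ≤ 2 * √x := by have := Real.sqrt_nonneg 2; linarith
    have hlx0 : 0 < Real.log (d*x) := by linarith
    calc _ ≤ (3/2 * (C0 + 20) * Real.log (d*x)) * (2 * √x) := by gcongr
      _ = _ := by ring
  rw [e]
  have h7 : 3 ≤ 20 * (√x * Real.log (d*x)) := by nlinarith
  have := abs_add_le ((TT χ x - x) / Real.log x + 2 / Real.log 2) (∫ t in (2:ℝ)..x, ((t * Real.log t ^ 2)⁻¹ * TT χ t - 1 / Real.log t ^ 2))
  have := abs_add_le ((TT χ x - x) / Real.log x) (2 / Real.log 2)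
  nlinarith

lemma real_vals (hr : ∀ a, (χ a).im = 0) {a : ZMod d} (ha : IsUnit a) : χ a = 1 ∨ χ a = -1 := by
  have h := χ.unit_norm_eq_one ha.unit
  rw [IsUnit.unit_spec] at h
  have h0 := hr a
  have e : χ a = ((χ a).re : ℂ) := by apply Complex.ext <;> simp [h0]
  rw [e] at h
  rw [Complex.norm_real, Real.norm_eq_abs] at h
  rcases (abs_eq (by norm_num)).1 h with h | h
  · left; rw [e, h]; simp
  · right; rw [e, h]; simp

open Classical in
lemma count_bound (hr : ∀ a, (χ a).im = 0) {x : ℝ} (hx : 2 ≤ x) :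
    |2 * (((Finset.Icc 1 ⌊x⌋₊).filter (fun p : ℕ => p.Prime ∧ χ ((p : ℕ) : ZMod d) = 1)).card : ℝ) -
      ∑ n ∈ Finset.Icc 0 ⌊x⌋₊, (Real.log n)⁻¹ * bb χ n| ≤ 2 * Real.log d := by
  have hd : (1:ℝ) ≤ d := by exact_mod_cast Nat.pos_of_ne_zero (NeZero.ne d)
  have e1 : (Finset.Icc 1 ⌊x⌋₊).filter (fun p : ℕ => p.Prime ∧ χ ((p : ℕ) : ZMod d) = 1) =
      (Finset.Icc 0 ⌊x⌋₊).filter (fun p : ℕ => p.Prime ∧ χ ((p : ℕ) : ZMod d) = 1) := by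
    ext p
    simp only [Finset.mem_filter, Finset.mem_Icc]
    constructor
    · rintro ⟨h, h2⟩; exact ⟨⟨by omega, h.2⟩, h2⟩
    · rintro ⟨h, h2⟩; exact ⟨⟨h2.1.one_lt.le, h.2⟩, h2⟩
  have hω : (d.primeFactors.card : ℝ) ≤ 2 * Real.log d := by
    have h1 : 2 ^ d.primeFactors.card ≤ d := by
      calc 2 ^ d.primeFactors.card ≤ ∏ p ∈ d.primeFactors, p :=
            Finset.pow_card_le_prod _ _ _ fun p hp => (Nat.prime_of_mem_primeFactors hp).two_le
        _ ≤ d := Nat.le_of_dvd (Nat.pos_of_ne_zero (NeZero.ne d)) (Nat.prod_primeFactors_dvd d)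
    have h2 : ((2:ℝ) ^ d.primeFactors.card) ≤ d := by exact_mod_cast h1
    have h3 := Real.log_le_log (by positivity) h2
    rw [Real.log_pow] at h3
    have := log_ge_of (le_refl 2)
    have h4 : (0:ℝ) ≤ d.primeFactors.card := Nat.cast_nonneg _
    nlinarith
  rw [e1, Finset.card_filter]
  push_cast
  rw [Finset.mul_sum, ← Finset.sum_sub_distrib]
  refine (Finset.abs_sum_le_sum_abs _ _).trans (le_trans ?_ hω)
  have : ∀ n ∈ Finset.Icc 0 ⌊x⌋₊, |2 * (if n.Prime ∧ χ (n : ZMod d) = 1 then (1:ℝ) else 0) - (Real.log n)⁻¹ * bb χ n| ≤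
      if n ∈ d.primeFactors then 1 else 0 := by
    intro n _
    by_cases hn : n.Prime
    · have hln : Real.log n ≠ 0 := by have := log_ge_of (u := n) (by exact_mod_cast hn.two_le); linarith
      have e3 : (Real.log n)⁻¹ * bb χ n = 1 + (χ n).re := by
        rw [bb, if_pos hn, aa, ArithmeticFunction.vonMangoldt_apply_prime hn]; field_simp
      rw [e3]
      by_cases hu : IsUnit (n : ZMod d)
      · have h0 : (0:ℝ) ≤ if n ∈ d.primeFactors then 1 else 0 := by split_ifs <;> norm_num
        refine le_trans (le_of_eq ?_) h0
        rcases real_vals χ hr hu with h | h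
        · rw [h]; simp [hn]; norm_num
        · have : ¬ ((-1:ℂ) = 1) := by norm_num
          rw [h]; simp [hn, this]
      · have hz : χ (n : ZMod d) = 0 := χ.map_nonunit hu
        have hmem : n ∈ d.primeFactors := by
          rw [ZMod.isUnit_iff_coprime, hn.coprime_iff_not_dvd, not_not] at hu
          exact Nat.mem_primeFactors.2 ⟨hn, hu, NeZero.ne d⟩
        rw [if_pos hmem, hz]; simp
    · have h0 : (0:ℝ) ≤ if n ∈ d.primeFactors then 1 else 0 := by split_ifs <;> norm_num
      refine le_trans (le_of_eq ?_) h0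
      rw [bb]; simp [hn]
  refine (Finset.sum_le_sum this).trans ?_
  rw [← Finset.sum_filter, Finset.sum_const, nsmul_eq_mul, mul_one]
  have : (Finset.Icc 0 ⌊x⌋₊).filter (fun n => n ∈ d.primeFactors) ⊆ d.primeFactors := fun n hn => (Finset.mem_filter.1 hn).2
  exact_mod_cast Finset.card_le_card this
end

end

/-- assuming GRH for quadratic fields, there is an absolute constant `C` such
that for every `d ≥ 1`, every real non-principal Dirichlet character `χ` mod `d`, and
every `x ≥ 2`, `#{p ≤ x prime : χ(p) = 1} = (1/2)·Li(x) + O(x^{1/2}·log(d·x))`. -/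
theorem chebotarev_quadratic (hGRH : GRHreal) :
    ∃ C : ℝ, 0 < C ∧ ∀ d : ℕ, 0 < d → ∀ χ : DirichletCharacter ℂ d,
      (∀ a : ZMod d, (χ a).im = 0) → χ ≠ 1 → ∀ x : ℝ, 2 ≤ x →
        |(((Finset.Icc 1 ⌊x⌋₊).filter (fun p : ℕ => p.Prime ∧ χ ((p : ℕ) : ZMod d) = 1)).card : ℝ)
            - (1 / 2) * Li x|
          ≤ C * x ^ ((1 : ℝ) / 2) * Real.log (d * x) := by
  refine ⟨2 * C0 + 100, by rw [C0]; norm_num, ?_⟩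
  intro d hd χ hr hχ x hx
  haveI : NeZero d := ⟨hd.ne'⟩
  have h1 := count_bound χ hr hx
  have h2 := pi_bound χ hχ hr (fun s hs h => ff_zeros hGRH χ hχ hr s hs h) hx
  rw [← Real.sqrt_eq_rpow]
  have hd1 : (1:ℝ) ≤ d := by exact_mod_cast hd
  have hll : Real.log d ≤ Real.log (d * x) := Real.log_le_log (by linarith) (by nlinarith)
  have hs : 1 ≤ √x := Real.one_le_sqrt.2 (by linarith)
  have hl0 : 0 ≤ Real.log d := Real.log_nonneg hd1
  have h3 : Real.log d ≤ √x * Real.log (d * x) := by nlinarith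
  obtain ⟨a1, a2⟩ := abs_le.1 h1
  obtain ⟨b1, b2⟩ := abs_le.1 h2
  rw [abs_le]
  constructor <;> nlinarith
end

section
/- For every fixed integer r ≥ 1, the number p_{n,r} of partitions of n into exactly r parts satisfies the asymptotic p_{n,r} ~ n^{r−1} / (r! · (r−1)!) as n → ∞; that is, p_{n,r} · r! · (r−1)! / n^{r−1} tends to 1. -/
/-- `p_{n,r}`: the number of partitions of `n` into exactly `r` parts. -/
noncomputable def partitionCountParts (n r : ℕ) : ℕ :=
  Nat.card {lam : Nat.Partition n // lam.parts.card = r}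

theorem aux_mono_unique {r : ℕ} {f g : Fin r → ℕ} (hf : Monotone f) (hg : Monotone g)
    (h : (List.ofFn f : Multiset ℕ) = (List.ofFn g : Multiset ℕ)) : f = g := by
  apply List.ofFn_injective
  exact List.Perm.eq_of_sortedLE hf.sortedLE_ofFn hg.sortedLE_ofFn (Multiset.coe_eq_coe.1 h)

theorem aux_comp {r : ℕ} (f : Fin r → ℕ) (σ : Equiv.Perm (Fin r)) :
    (List.ofFn (f ∘ σ) : Multiset ℕ) = (List.ofFn f : Multiset ℕ) :=
  Multiset.coe_eq_coe.2 (Equiv.Perm.ofFn_comp_perm σ f)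

theorem aux_exists {r : ℕ} (s : Multiset ℕ) (hs : s.card = r) :
    ∃ g : Fin r → ℕ, Monotone g ∧ (List.ofFn g : Multiset ℕ) = s := by
  subst hs
  have hl : s.toList.length = s.card := by simp
  obtain ⟨g, hg⟩ : ∃ g : Fin s.card → ℕ, List.ofFn g = s.toList := by
    rw [← hl]
    exact ⟨s.toList.get, List.ofFn_get _⟩
  refine ⟨g ∘ Tuple.sort g, Tuple.monotone_sort g, ?_⟩
  rw [aux_comp, hg, Multiset.coe_toList]

theorem aux_card (k m : ℕ) :
    k.factorial * Nat.card {f : Fin (k + 1) → ℕ // ∑ i, f i = m} = (m + 1).ascFactorial k := by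
  rw [← Nat.card_congr (Sym.equivNatSumOfFintype (Fin (k + 1)) m), Nat.card_eq_fintype_card,
    Sym.card_sym_eq_choose, Nat.ascFactorial_eq_factorial_mul_choose, Fintype.card_fin]
  congr 1
  rw [show k + 1 + m - 1 = m + k by omega, Nat.choose_symm_add]

instance aux_fin (k m : ℕ) : Finite {f : Fin (k + 1) → ℕ // ∑ i, f i = m} :=
  Finite.of_equiv _ (Sym.equivNatSumOfFintype (Fin (k + 1)) m)

theorem aux_lower (k m : ℕ) :
    Nat.card {f : Fin (k + 1) → ℕ // ∑ i, f i = m} ≤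
      partitionCountParts (m + (k + 1)) (k + 1) * (k + 1).factorial := by
  have hc : (k + 1).factorial = Nat.card (Equiv.Perm (Fin (k + 1))) := by
    simp [Nat.card_eq_fintype_card, Fintype.card_perm]
  rw [hc, partitionCountParts, ← Nat.card_prod]
  let F : {f : Fin (k + 1) → ℕ // ∑ i, f i = m} →
      {lam : Nat.Partition (m + (k + 1)) // lam.parts.card = k + 1} × Equiv.Perm (Fin (k + 1)) :=
    fun f => (⟨⟨(List.ofFn (fun i => f.1 i + 1) : Multiset ℕ), by
      intro i hi
      simp only [Multiset.mem_coe, List.mem_ofFn] at hi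
      obtain ⟨j, rfl⟩ := hi
      omega, by
      rw [Multiset.sum_coe, List.sum_ofFn, Finset.sum_add_distrib, f.2]
      simp⟩, by simp⟩, Tuple.sort f.1)
  apply Nat.card_le_card_of_injective F
  intro f g h
  have h1 : (List.ofFn (fun i => f.1 i + 1) : Multiset ℕ) =
      (List.ofFn (fun i => g.1 i + 1) : Multiset ℕ) :=
    congrArg (fun x => x.1.1.parts) h
  have h2 : Tuple.sort f.1 = Tuple.sort g.1 := congrArg (fun x => x.2) h
  have h3 := aux_mono_unique (f := (fun i => f.1 i + 1) ∘ Tuple.sort f.1)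
    (g := (fun i => g.1 i + 1) ∘ Tuple.sort g.1)
    (fun a b hab => Nat.succ_le_succ (Tuple.monotone_sort f.1 hab))
    (fun a b hab => Nat.succ_le_succ (Tuple.monotone_sort g.1 hab))
    (by rw [aux_comp, aux_comp, h1])
  apply Subtype.ext
  funext i
  have := congrFun h3 ((Tuple.sort f.1).symm i)
  rw [← h2] at this
  simpa using this

theorem aux_upper (k n : ℕ) :
    partitionCountParts n (k + 1) * (k + 1).factorial ≤
      Nat.card {f : Fin (k + 1) → ℕ // ∑ i, f i = n + ∑ i : Fin (k + 1), (i : ℕ)} := by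
  have hc : (k + 1).factorial = Nat.card (Equiv.Perm (Fin (k + 1))) := by
    simp [Nat.card_eq_fintype_card, Fintype.card_perm]
  rw [hc, partitionCountParts, ← Nat.card_prod]
  choose L hL1 hL2 using fun lam : {lam : Nat.Partition n // lam.parts.card = k + 1} =>
    aux_exists lam.1.parts lam.2
  let G : {lam : Nat.Partition n // lam.parts.card = k + 1} → Fin (k + 1) → ℕ :=
    fun lam i => L lam i + i
  have hG : ∀ lam, StrictMono (G lam) := fun lam a b hab =>
    add_lt_add_of_le_of_lt (hL1 lam hab.le) hab
  let F : {lam : Nat.Partition n // lam.parts.card = k + 1} × Equiv.Perm (Fin (k + 1)) →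
      {f : Fin (k + 1) → ℕ // ∑ i, f i = n + ∑ i : Fin (k + 1), (i : ℕ)} :=
    fun x => ⟨G x.1 ∘ x.2, by
      have : ∑ i, (G x.1 ∘ x.2) i = ∑ i, G x.1 i := Equiv.sum_comp x.2 (G x.1)
      rw [this, Finset.sum_add_distrib]
      congr 1
      rw [← List.sum_ofFn, ← Multiset.sum_coe, hL2, x.1.1.parts_sum]⟩
  apply Nat.card_le_card_of_injective F
  rintro ⟨x, σ⟩ ⟨y, τ⟩ h
  have h1 : G x ∘ σ = G y ∘ τ := congrArg Subtype.val h
  have h2 : G x = G y := by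
    rw [← (hG x).range_inj (hG y), ← σ.surjective.range_comp (G x), h1, τ.surjective.range_comp]
  have h3 : L x = L y := by
    funext i
    have := congrFun h2 i
    simpa [G] using this
  have h4 : x = y := by
    apply Subtype.ext
    apply Nat.Partition.ext
    rw [← hL2 x, ← hL2 y, h3]
  subst h4
  have h5 : σ = τ := Equiv.ext fun i => (hG x).injective (congrFun h1 i)
  rw [h5]

/-- for fixed `r ≥ 1`, `p_{n,r} ~ n^{r-1}/(r!·(r-1)!)` as `n → ∞`,
i.e. `p_{n,r}·r!·(r-1)!/n^{r-1} → 1`. -/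
theorem partition_parts_asymptotic (r : ℕ) (hr : 1 ≤ r) :
    Filter.Tendsto
      (fun n : ℕ => (partitionCountParts n r : ℝ) *
        ((r.factorial : ℝ) * ((r - 1).factorial : ℝ)) / (n : ℝ) ^ (r - 1))
      Filter.atTop (nhds 1) := by
  obtain ⟨k, rfl⟩ : ∃ k, r = k + 1 := ⟨r - 1, by omega⟩
  simp only [Nat.add_sub_cancel]
  have key : ∀ c : ℝ, Filter.Tendsto (fun n : ℕ => (1 + c / (n : ℝ)) ^ k)
      Filter.atTop (nhds 1) := by
    intro c
    have := ((tendsto_const_div_atTop_nhds_zero_nat c).const_add 1).pow k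
    simpa using this
  refine tendsto_of_tendsto_of_tendsto_of_le_of_le' (key (-k))
    (key ((∑ i : Fin (k + 1), (i : ℕ) : ℕ) + k)) ?_ ?_
  · filter_upwards [Filter.eventually_ge_atTop (k + 1)] with n hn
    obtain ⟨m, rfl⟩ : ∃ m, n = m + (k + 1) := ⟨n - (k + 1), by omega⟩
    have hpos : (0 : ℝ) < ((m + (k + 1) : ℕ) : ℝ) := by positivity
    have h : (m + 1) ^ k ≤ partitionCountParts (m + (k + 1)) (k + 1) *
        ((k + 1).factorial * k.factorial) := by
      calc (m + 1) ^ k ≤ (m + 1).ascFactorial k := Nat.pow_succ_le_ascFactorial _ _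
        _ = _ := (aux_card k m).symm
        _ ≤ k.factorial * _ := Nat.mul_le_mul_left _ (aux_lower k m)
        _ = _ := by ring
    rw [le_div_iff₀ (by positivity), ← mul_pow]
    have e : (1 + -(k : ℝ) / ((m + (k + 1) : ℕ) : ℝ)) * ((m + (k + 1) : ℕ) : ℝ) = (m + 1 : ℝ) := by
      field_simp
      push_cast
      ring
    rw [e]
    exact_mod_cast h
  · filter_upwards [Filter.eventually_ge_atTop 1] with n hn
    have hpos : (0 : ℝ) < (n : ℝ) := by exact_mod_cast hn
    generalize hS : ∑ i : Fin (k + 1), (i : ℕ) = S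
    have h : partitionCountParts n (k + 1) * ((k + 1).factorial * k.factorial) ≤
        (n + S + k) ^ k := by
      calc _ = k.factorial * (partitionCountParts n (k + 1) * (k + 1).factorial) := by ring
        _ ≤ k.factorial * _ := Nat.mul_le_mul_left _ (aux_upper k n)
        _ = _ := aux_card k _
        _ ≤ _ := by rw [hS]; exact Nat.ascFactorial_le_pow_add _ _
    rw [div_le_iff₀ (by positivity), ← mul_pow]
    have e : (1 + ((S : ℝ) + k) / (n : ℝ)) * (n : ℝ) = (n + S + k : ℝ) := by
      field_simp
      ring
    rw [e]
    exact_mod_cast h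
end
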